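/- arXiv:quant-ph/0610259 — 14 statements merged into one kernel-verified Lean document; each statement's English description precedes it below -/
import Mathlib

section
/- Let H₁, H₂, H₃ be complex Hilbert spaces and let X : H₁ →L[ℂ] H₂ and Y : H₁ →L[ℂ] H₃ be bounded linear operators. Then there exists a contraction Γ : H₂ →L[ℂ] H₃ (i.e. ‖Γ‖ ≤ 1) with Γ ∘ X = Y if and only if Y† ∘ Y ≤ X† ∘ X, i.e. the operator X† ∘ X − Y† ∘ Y is positive (equivalently, ‖Y h‖ ≤ ‖X h‖ for every h ∈ H₁). -/
/-!
Both conditions are equivalent to the pointwise bound `‖Y h‖ ≤ ‖X h‖`: the quadratic form of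
`X† X - Y† Y` at `h` is `‖X h‖² - ‖Y h‖²`, and a contraction `Γ` with `Γ X = Y` clearly gives the
bound. Conversely, under the bound `X h ↦ Y h` is a well-defined contraction on the range of `X`;
it extends by continuity to the closure of the range (`LinearMap.extendOfNorm`), and precomposing
with the orthogonal projection onto that closure extends it by zero to all of `H₂`.
-/

open ContinuousLinearMap

section

variable {H₁ H₂ H₃ : Type*}
    [NormedAddCommGroup H₁] [InnerProductSpace ℂ H₁]
    [NormedAddCommGroup H₂] [InnerProductSpace ℂ H₂] [CompleteSpace H₂]
    [NormedAddCommGroup H₃] [InnerProductSpace ℂ H₃] [CompleteSpace H₃]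

lemma isPositive_adjoint_comp_sub_iff [CompleteSpace H₁] (X : H₁ →L[ℂ] H₂) (Y : H₁ →L[ℂ] H₃) :
    (ContinuousLinearMap.adjoint X ∘L X - ContinuousLinearMap.adjoint Y ∘L Y).IsPositive ↔
      ∀ h, ‖Y h‖ ≤ ‖X h‖ := by
  have hsa : IsSelfAdjoint
      (ContinuousLinearMap.adjoint X ∘L X - ContinuousLinearMap.adjoint Y ∘L Y) :=
    (isPositive_adjoint_comp_self X).isSelfAdjoint.sub (isPositive_adjoint_comp_self Y).isSelfAdjoint
  rw [isPositive_def', and_iff_right hsa]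
  refine forall_congr' fun h => ?_
  rw [reApplyInnerSelf_apply, sub_apply, inner_sub_left, map_sub,
    ← apply_norm_sq_eq_inner_adjoint_left, ← apply_norm_sq_eq_inner_adjoint_left, sub_nonneg,
    sq_le_sq₀ (norm_nonneg _) (norm_nonneg _)]

lemma exists_contraction_of_norm_le (X : H₁ →L[ℂ] H₂) (Y : H₁ →L[ℂ] H₃)
    (hXY : ∀ h, ‖Y h‖ ≤ ‖X h‖) : ∃ Γ : H₂ →L[ℂ] H₃, ‖Γ‖ ≤ 1 ∧ Γ ∘L X = Y := by
  let K : Submodule ℂ H₂ := (LinearMap.range X.toLinearMap).topologicalClosure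
  have : CompleteSpace K :=
    (Submodule.isClosed_topologicalClosure _).completeSpace_coe
  have hX : ∀ h, X h ∈ K := fun h => Submodule.le_topologicalClosure _ ⟨h, rfl⟩
  let e : H₁ →ₗ[ℂ] K := X.toLinearMap.codRestrict K hX
  have hdense : DenseRange e := by
    intro k
    rw [closure_subtype, ← Set.range_comp]
    exact k.2
  have hnorm : ∀ h, ‖Y.toLinearMap h‖ ≤ 1 * ‖e h‖ := fun h => by
    rw [one_mul]
    exact hXY h
  refine ⟨Y.toLinearMap.extendOfNorm e ∘L K.orthogonalProjectionOnto, ?_, ?_⟩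
  · calc _ ≤ ‖Y.toLinearMap.extendOfNorm e‖ * ‖K.orthogonalProjectionOnto‖ := opNorm_comp_le _ _
      _ ≤ 1 * 1 := by
        gcongr
        · exact LinearMap.opNorm_extendOfNorm_le hdense zero_le_one hnorm
        · exact K.orthogonalProjectionOnto_norm_le
      _ = 1 := one_mul 1
  · ext h
    have hp : K.orthogonalProjectionOnto (X h) = e h :=
      K.orthogonalProjectionOnto_mem_subspace_eq_self (e h)
    rw [comp_apply, comp_apply, hp]
    exact LinearMap.extendOfNorm_eq hdense ⟨1, hnorm⟩ h

end

theorem row_contraction_factorization_iff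
    {H₁ H₂ H₃ : Type*}
    [NormedAddCommGroup H₁] [InnerProductSpace ℂ H₁] [CompleteSpace H₁]
    [NormedAddCommGroup H₂] [InnerProductSpace ℂ H₂] [CompleteSpace H₂]
    [NormedAddCommGroup H₃] [InnerProductSpace ℂ H₃] [CompleteSpace H₃]
    (X : H₁ →L[ℂ] H₂) (Y : H₁ →L[ℂ] H₃) :
    (∃ Γ : H₂ →L[ℂ] H₃, ‖Γ‖ ≤ 1 ∧ Γ ∘L X = Y) ↔
      (ContinuousLinearMap.adjoint X ∘L X - ContinuousLinearMap.adjoint Y ∘L Y).IsPositive := by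
  rw [isPositive_adjoint_comp_sub_iff]
  refine ⟨?_, exists_contraction_of_norm_le X Y⟩
  rintro ⟨Γ, hΓ, rfl⟩ h
  simpa using Γ.le_of_opNorm_le hΓ (X h)
end

section
/- Let H₁, H₂, H₃ be complex Hilbert spaces and let X : H₁ →L[ℂ] H₂ and Y : H₁ →L[ℂ] H₃ satisfy X† ∘ X = Y† ∘ Y. Then there exists a bounded operator V : H₂ →L[ℂ] H₃ with V ∘ X = Y which is a partial isometry with initial space the closure of the range of X: ‖V h‖ = ‖h‖ for every h in the closure of the range of X, and V h = 0 for every h orthogonal to the range of X. -/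
/-!
The hypothesis says exactly that `‖X x‖ = ‖Y x‖` for all `x`, so `X x ↦ Y x` is a well-defined
isometry on the range of `X`. It extends by continuity (`LinearMap.extendOfNorm`) to a bounded
operator `W` on the closure `K` of that range, and `W` is isometric on `K` because the set where
`‖W k‖ = ‖k‖` is closed and contains the range of `X`. Precomposing `W` with the orthogonal
projection onto `K` gives the partial isometry.
-/

open ContinuousLinearMap
open scoped InnerProductSpace

theorem exists_partial_isometry_of_adjoint_comp_eq
    {H₁ H₂ H₃ : Type*}
    [NormedAddCommGroup H₁] [InnerProductSpace ℂ H₁] [CompleteSpace H₁]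
    [NormedAddCommGroup H₂] [InnerProductSpace ℂ H₂] [CompleteSpace H₂]
    [NormedAddCommGroup H₃] [InnerProductSpace ℂ H₃] [CompleteSpace H₃]
    (X : H₁ →L[ℂ] H₂) (Y : H₁ →L[ℂ] H₃)
    (h : ContinuousLinearMap.adjoint X ∘L X = ContinuousLinearMap.adjoint Y ∘L Y) :
    ∃ V : H₂ →L[ℂ] H₃, V ∘L X = Y ∧
      (∀ h₂ ∈ closure (Set.range X), ‖V h₂‖ = ‖h₂‖) ∧
      (∀ h₂ : H₂, (∀ x : H₁, ⟪X x, h₂⟫_ℂ = 0) → V h₂ = 0) := by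
  have hnorm : ∀ x, ‖Y x‖ = ‖X x‖ := fun x => by
    rw [apply_norm_eq_sqrt_inner_adjoint_left, apply_norm_eq_sqrt_inner_adjoint_left, h]
  let K : Submodule ℂ H₂ := (LinearMap.range X.toLinearMap).topologicalClosure
  have hK : (K : Set H₂) = closure (Set.range X) := rfl
  have hXK : ∀ x, X x ∈ K := fun x =>
    Submodule.le_topologicalClosure _ (LinearMap.mem_range_self X.toLinearMap x)
  have : CompleteSpace K := (Submodule.isClosed_topologicalClosure _).completeSpace_coe
  let e : H₁ →ₗ[ℂ] K := X.toLinearMap.codRestrict K hXK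
  have he : DenseRange e := by
    intro k
    rw [closure_subtype, ← Set.range_comp]
    exact hK.subset k.2
  let W : K →L[ℂ] H₃ := Y.toLinearMap.extendOfNorm e
  have hW : ∀ x, W (e x) = Y x := fun x =>
    LinearMap.extendOfNorm_eq he ⟨1, fun x => by simpa [e] using (hnorm x).le⟩ x
  have hWnorm : ∀ k, ‖W k‖ = ‖k‖ := fun k =>
    he.induction_on (p := fun k => ‖W k‖ = ‖k‖) k
      (isClosed_eq W.continuous.norm continuous_norm)
      fun x => by rw [hW]; exact hnorm x
  have hproj : ∀ k : K, (W ∘L K.orthogonalProjectionOnto) k = W k := fun k => by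
    simp
  refine ⟨W ∘L K.orthogonalProjectionOnto, ?_, ?_, ?_⟩
  · ext x
    exact (hproj (e x)).trans (hW x)
  · intro y hy
    rw [← hK] at hy
    exact (congrArg norm (hproj ⟨y, hy⟩)).trans (hWnorm ⟨y, hy⟩)
  · intro y hy
    have hyK : y ∈ Kᗮ := by
      rw [Submodule.orthogonal_closure, Submodule.mem_orthogonal]
      rintro _ ⟨x, rfl⟩
      exact hy x
    rw [comp_apply, Submodule.orthogonalProjectionOnto_eq_zero_iff.mpr hyK, map_zero]
end

section
/- Let T : H₁ →L[ℂ] H₂ be a contraction between complex Hilbert spaces, and let D_T = √(1 − T† ∘ T) : H₁ →L[ℂ] H₁ and D_{T†} = √(1 − T ∘ T†) : H₂ →L[ℂ] H₂ be the positive square roots of the defect operators. Then T ∘ D_T = D_{T†} ∘ T. -/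
open ContinuousLinearMap

/-!
Put `X = T D_T - D_{T†} T`. Since `D_{T†}² T = T - T T† T = T D_T²`, one has the Sylvester equation
`D_{T†} X = - X D_T`. Positivity of both defect operators forces both sides to vanish: the operator
`X† D_{T†} X = -(X† X) D_T` is positive, hence self-adjoint, so the positive operators `X† X` and
`D_T` commute and their product is positive as well as negative. Thus `X† X D_T = 0`, whence
`X D_T = 0` and `D_{T†} X = 0`. Finally `X† X = D_T T† X - T† D_{T†} X = D_T T† X`, so
`(X† X)² = X† (X D_T) T† X = 0` and `X = 0`. No functional calculus applied to `T† T` is needed.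
-/

lemma eq_zero_of_adjoint_comp_self {H₁ H₂ : Type*}
    [NormedAddCommGroup H₁] [InnerProductSpace ℂ H₁] [CompleteSpace H₁]
    [NormedAddCommGroup H₂] [InnerProductSpace ℂ H₂] [CompleteSpace H₂]
    (X : H₁ →L[ℂ] H₂) (h : adjoint X ∘L X = 0) : X = 0 := by
  ext v
  have h1 : adjoint X (X v) = 0 := congrArg (fun S : H₁ →L[ℂ] H₁ => S v) h
  have h2 : inner ℂ (X v) (X v) = 0 := by
    rw [← adjoint_inner_left, h1, inner_zero_left]
  simpa using inner_self_eq_zero.mp h2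

/-- For positive `A` and `B`, the Sylvester equation `B X = - X A` has only solutions for which both
sides vanish. -/
lemma comp_eq_zero_of_sylvester {H₁ H₂ : Type*}
    [NormedAddCommGroup H₁] [InnerProductSpace ℂ H₁] [CompleteSpace H₁]
    [NormedAddCommGroup H₂] [InnerProductSpace ℂ H₂] [CompleteSpace H₂]
    {A : H₁ →L[ℂ] H₁} {B : H₂ →L[ℂ] H₂} (hA : A.IsPositive) (hB : B.IsPositive)
    (X : H₁ →L[ℂ] H₂) (h : B ∘L X = -(X ∘L A)) : X ∘L A = 0 := by
  have hA0 : 0 ≤ A := (nonneg_iff_isPositive A).mpr hA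
  have hQ0 : 0 ≤ adjoint X ∘L X := (nonneg_iff_isPositive _).mpr (isPositive_adjoint_comp_self X)
  have hP0 : 0 ≤ adjoint X ∘L B ∘L X := (nonneg_iff_isPositive _).mpr (hB.adjoint_conj X)
  have hP : adjoint X ∘L B ∘L X = -((adjoint X ∘L X) * A) := by
    rw [h, comp_neg]; rfl
  rw [hP] at hP0
  have hsa : IsSelfAdjoint ((adjoint X ∘L X) * A) := by
    simpa using (IsSelfAdjoint.of_nonneg hP0).neg
  have hcomm : Commute (adjoint X ∘L X) A :=
    ((IsSelfAdjoint.of_nonneg hQ0).commute_iff (IsSelfAdjoint.of_nonneg hA0)).mpr hsa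
  have hzero : (adjoint X ∘L X) * A = 0 :=
    le_antisymm (neg_nonneg.mp hP0) (hcomm.mul_nonneg hQ0 hA0)
  apply eq_zero_of_adjoint_comp_self
  calc adjoint (X ∘L A) ∘L (X ∘L A) = adjoint A ∘L ((adjoint X ∘L X) * A) := by
        rw [adjoint_comp]; rfl
    _ = 0 := by rw [hzero, comp_zero]

theorem contraction_defect_intertwine
    {H₁ H₂ : Type*}
    [NormedAddCommGroup H₁] [InnerProductSpace ℂ H₁] [CompleteSpace H₁]
    [NormedAddCommGroup H₂] [InnerProductSpace ℂ H₂] [CompleteSpace H₂]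
    (T : H₁ →L[ℂ] H₂) (hT : ‖T‖ ≤ 1)
    (DT : H₁ →L[ℂ] H₁) (hDTpos : DT.IsPositive)
    (hDTsq : DT ∘L DT = 1 - ContinuousLinearMap.adjoint T ∘L T)
    (DTs : H₂ →L[ℂ] H₂) (hDTspos : DTs.IsPositive)
    (hDTssq : DTs ∘L DTs = 1 - T ∘L ContinuousLinearMap.adjoint T) :
    T ∘L DT = DTs ∘L T := by
  obtain ⟨X, hX⟩ : ∃ X, X = T ∘L DT - DTs ∘L T := ⟨_, rfl⟩
  have hsyl : DTs ∘L X = -(X ∘L DT) := by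
    ext v
    have h1 : DT (DT v) = v - adjoint T (T v) := congrArg (fun S : H₁ →L[ℂ] H₁ => S v) hDTsq
    have h2 : DTs (DTs (T v)) = T v - T (adjoint T (T v)) :=
      congrArg (fun S : H₂ →L[ℂ] H₂ => S (T v)) hDTssq
    simp [hX, h1, h2]
  have hXA : X ∘L DT = 0 := comp_eq_zero_of_sylvester hDTpos hDTspos X hsyl
  have hBX : DTs ∘L X = 0 := by rw [hsyl, hXA, neg_zero]
  have hadj : adjoint X = DT ∘L adjoint T - adjoint T ∘L DTs := by
    rw [hX, map_sub, adjoint_comp, adjoint_comp, hDTpos.isSelfAdjoint.adjoint_eq,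
      hDTspos.isSelfAdjoint.adjoint_eq]
  have hQ : adjoint X ∘L X = DT ∘L adjoint T ∘L X := by
    rw [hadj, sub_comp, comp_assoc, comp_assoc, hBX, comp_zero, sub_zero]
  have hX0 : X = 0 := by
    apply eq_zero_of_adjoint_comp_self
    apply eq_zero_of_adjoint_comp_self
    calc adjoint (adjoint X ∘L X) ∘L (adjoint X ∘L X)
        = adjoint X ∘L (X ∘L (adjoint X ∘L X)) := by
          rw [adjoint_comp, adjoint_adjoint, comp_assoc]
      _ = adjoint X ∘L ((X ∘L DT) ∘L (adjoint T ∘L X)) := by rw [hQ, comp_assoc]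
      _ = 0 := by rw [hXA, zero_comp, comp_zero]
  exact sub_eq_zero.mp (hX ▸ hX0)
end

section
/- Let T : H₁ →L[ℂ] H₂ be a contraction between complex Hilbert spaces, with defect operators D_T = √(1 − T†∘T) and D_{T†} = √(1 − T∘T†). Then the Julia operator J(T) : (H₁ × H₂, ℓ²) → (H₂ × H₁, ℓ²) defined by J(T)(x, y) = (T x + D_{T†} y, D_T x − T† y) is unitary: it preserves inner products (⟪J u, J v⟫ = ⟪u, v⟫ for all u, v) and is surjective. -/
open ContinuousLinearMap
open scoped InnerProductSpace

/-!
The only analytic input is the intertwining relation `DTs ∘ T = T ∘ DT`. From `DTs² T = T DT²`, which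
is immediate from the formulas for the squared defect operators, it follows by an elementary argument
with positive operators (`intertwine_of_sq`), so no functional calculus for operators between two
different spaces is needed. Taking adjoints gives `T† ∘ DTs = DT ∘ T†`.

With these relations the block matrix `J = [T, DTs; DT, -T†]` satisfies `J† J = 1` and `J J† = 1`:
diagonal entries are `T† T + DT² = 1` and `T T† + DTs² = 1`, off-diagonal ones vanish by
intertwining. The first identity is the preservation of inner products, and the second exhibits
the preimage `J† (a, b) = (T† a + DT b, DTs a - T b)` of `(a, b)`.
-/

/-- Positive operators whose squares are intertwined by `T` are themselves intertwined by `T`.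
The difference `X = A T - T B` satisfies `A X = - X B`. Hence `X† X B = - X† A X` is self-adjoint, so
it is a product of commuting positive operators which is also negative, and therefore zero. This
gives `X B = 0` and `A X = 0`, from which `X X† X = 0` and then `X = 0`. -/
lemma intertwine_of_sq {H₁ H₂ : Type*}
    [NormedAddCommGroup H₁] [InnerProductSpace ℂ H₁] [CompleteSpace H₁]
    [NormedAddCommGroup H₂] [InnerProductSpace ℂ H₂] [CompleteSpace H₂]
    (T : H₁ →L[ℂ] H₂) (B : H₁ →L[ℂ] H₁) (hB : B.IsPositive)
    (A : H₂ →L[ℂ] H₂) (hA : A.IsPositive)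
    (h : ∀ x, A (A (T x)) = T (B (B x))) (x : H₁) : A (T x) = T (B x) := by
  have symA : ∀ u v, ⟪A u, v⟫_ℂ = ⟪u, A v⟫_ℂ := hA.isSymmetric
  have symB : ∀ u v, ⟪B u, v⟫_ℂ = ⟪u, B v⟫_ℂ := hB.isSymmetric
  obtain ⟨X, hX⟩ : ∃ X : H₁ →L[ℂ] H₂, X = A ∘L T - T ∘L B := ⟨_, rfl⟩
  have hXx : ∀ z, X z = A (T z) - T (B z) := fun z => by simp [hX]
  have hAX : ∀ z, A (X z) = - X (B z) := fun z => by simp [hXx, h]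
  obtain ⟨P, hP⟩ : ∃ P : H₁ →L[ℂ] H₁, P = adjoint X ∘L X := ⟨_, rfl⟩
  have hPpos : P.IsPositive := hP ▸ isPositive_adjoint_comp_self X
  have hPB : P * B = - (adjoint X ∘L A ∘L X) := by
    ext z
    simp [hP, hAX]
  have hQ : (adjoint X ∘L A ∘L X).IsPositive := hA.adjoint_conj X
  have hcomm : Commute P B := by
    rw [IsSelfAdjoint.commute_iff hPpos.isSelfAdjoint hB.isSelfAdjoint, hPB]
    exact hQ.isSelfAdjoint.neg
  have hnn : 0 ≤ P * B := Commute.mul_nonneg ((nonneg_iff_isPositive _).2 hPpos)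
    ((nonneg_iff_isPositive _).2 hB) hcomm
  have hPB0 : P * B = 0 := by
    refine le_antisymm ?_ hnn
    rw [hPB, neg_nonpos]
    exact (nonneg_iff_isPositive _).2 hQ
  have ker : ∀ z, adjoint X (X z) = 0 → X z = 0 := fun z hz => by
    rw [← inner_self_eq_zero (𝕜 := ℂ), ← adjoint_inner_right, hz, inner_zero_right]
  have hXB : ∀ z, X (B z) = 0 := fun z => ker _ <| by
    simpa [hP] using congrArg (fun S : H₁ →L[ℂ] H₁ => S z) hPB0
  have hAX0 : ∀ z, A (X z) = 0 := fun z => by rw [hAX, hXB, neg_zero]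
  have hBX : ∀ w, B (adjoint X w) = 0 := fun w => by
    rw [← inner_self_eq_zero (𝕜 := ℂ), symB, adjoint_inner_left, hXB, inner_zero_right]
  have hXXX : X (adjoint X (X x)) = 0 := by
    have e : X (adjoint X (X x)) = A (T (adjoint X (X x))) := by
      rw [hXx (adjoint X (X x)), hBX, map_zero, sub_zero]
    rw [← inner_self_eq_zero (𝕜 := ℂ)]
    nth_rewrite 2 [e]
    rw [← symA, hAX0, inner_zero_left]
  have hX0 : X x = 0 := ker x <| by
    rw [← inner_self_eq_zero (𝕜 := ℂ), adjoint_inner_left, hXXX, inner_zero_right]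
  rwa [hXx, sub_eq_zero] at hX0

theorem julia_operator_unitary
    {H₁ H₂ : Type*}
    [NormedAddCommGroup H₁] [InnerProductSpace ℂ H₁] [CompleteSpace H₁]
    [NormedAddCommGroup H₂] [InnerProductSpace ℂ H₂] [CompleteSpace H₂]
    (T : H₁ →L[ℂ] H₂) (hT : ‖T‖ ≤ 1)
    (DT : H₁ →L[ℂ] H₁) (hDTpos : DT.IsPositive)
    (hDTsq : DT ∘L DT = 1 - ContinuousLinearMap.adjoint T ∘L T)
    (DTs : H₂ →L[ℂ] H₂) (hDTspos : DTs.IsPositive)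
    (hDTssq : DTs ∘L DTs = 1 - T ∘L ContinuousLinearMap.adjoint T)
    (J : WithLp 2 (H₁ × H₂) → WithLp 2 (H₂ × H₁))
    (hJ : ∀ u : WithLp 2 (H₁ × H₂),
      J u = (WithLp.equiv 2 (H₂ × H₁)).symm
        (T ((WithLp.equiv 2 (H₁ × H₂)) u).1 + DTs ((WithLp.equiv 2 (H₁ × H₂)) u).2,
         DT ((WithLp.equiv 2 (H₁ × H₂)) u).1
           - (ContinuousLinearMap.adjoint T) ((WithLp.equiv 2 (H₁ × H₂)) u).2)) :
    (∀ u v : WithLp 2 (H₁ × H₂), ⟪J u, J v⟫_ℂ = ⟪u, v⟫_ℂ) ∧ Function.Surjective J := by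
  have symA : ∀ u v, ⟪DTs u, v⟫_ℂ = ⟪u, DTs v⟫_ℂ := hDTspos.isSymmetric
  have symB : ∀ u v, ⟪DT u, v⟫_ℂ = ⟪u, DT v⟫_ℂ := hDTpos.isSymmetric
  have sqB : ∀ x, DT (DT x) = x - adjoint T (T x) := fun x => by
    simpa using congrArg (fun S : H₁ →L[ℂ] H₁ => S x) hDTsq
  have sqA : ∀ y, DTs (DTs y) = y - T (adjoint T y) := fun y => by
    simpa using congrArg (fun S : H₂ →L[ℂ] H₂ => S y) hDTssq
  have hAT : ∀ x, DTs (T x) = T (DT x) :=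
    intertwine_of_sq T DT hDTpos DTs hDTspos fun x => by simp [sqA, sqB]
  have hTA : ∀ y, adjoint T (DTs y) = DT (adjoint T y) := fun y =>
    ext_inner_right ℂ fun x => by
      rw [adjoint_inner_left, symA, hAT, symB, adjoint_inner_left]
  constructor
  · intro u v
    simp only [hJ, WithLp.prod_inner_apply, WithLp.equiv_apply, WithLp.equiv_symm_apply]
    -- With every operator moved to the right-hand slot, `u` is paired with `J† (J v) = v`.
    simp only [inner_add_left, inner_sub_left, symA, symB, ← adjoint_inner_right T,
      adjoint_inner_left, sqA, sqB, hAT, hTA, inner_add_right, inner_sub_right]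
    ring
  · intro w
    refine ⟨WithLp.toLp 2 (adjoint T w.fst + DT w.snd, DTs w.fst - T w.snd), ?_⟩
    rw [hJ]
    apply (WithLp.equiv 2 (H₂ × H₁)).injective
    ext <;> simp [sqA, sqB, hAT, hTA]
end

section
/- Let H, H₁, H₂ be complex Hilbert spaces and T₁ : H₁ →L[ℂ] H, T₂ : H₂ →L[ℂ] H bounded operators. Then T₁ ∘ T₁† + T₂ ∘ T₂† ≤ 1 (i.e. the row operator [T₁ T₂] is a contraction) if and only if ‖T₁‖ ≤ 1 and there exists a contraction Γ₂ : H₂ →L[ℂ] H with T₂ = D_{T₁†} ∘ Γ₂, where D_{T₁†} = √(1 − T₁ ∘ T₁†). -/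
/-!
All operator inequalities are read as norm inequalities: `1 - (T₁T₁† + T₂T₂†) ≥ 0` means
`‖T₁†x‖² + ‖T₂†x‖² ≤ ‖x‖²` for all `x` (`isPositive_one_sub_add_iff`), and if `D` is a self-adjoint
square root of `1 - T₁T₁†` then `‖Dx‖² = ‖x‖² - ‖T₁†x‖²` (`norm_sq_defect`). The row operator is
therefore a contraction iff `T₁` is one and `‖T₂†x‖ ≤ ‖D†x‖` for all `x`. By Douglas' factorization
lemma (`exists_contraction_factor`) the latter holds iff `T₂ = DΓ₂` for a contraction `Γ₂`.
-/

open ContinuousLinearMap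

section RowContraction

variable {H H₁ H₂ : Type*}
  [NormedAddCommGroup H] [InnerProductSpace ℂ H] [CompleteSpace H]
  [NormedAddCommGroup H₁] [InnerProductSpace ℂ H₁] [CompleteSpace H₁]
  [NormedAddCommGroup H₂] [InnerProductSpace ℂ H₂] [CompleteSpace H₂]

theorem re_inner_comp_adjoint (T : H₁ →L[ℂ] H) (x : H) :
    (inner ℂ ((T ∘L adjoint T) x) x).re = ‖adjoint T x‖ ^ 2 := by
  have := apply_norm_sq_eq_inner_adjoint_left (adjoint T) x
  rw [adjoint_adjoint] at this
  exact this.symm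

theorem re_inner_self {E : Type*} [NormedAddCommGroup E] [InnerProductSpace ℂ E] (x : E) : (inner ℂ x x).re = ‖x‖ ^ 2 :=
  inner_self_eq_norm_sq (𝕜 := ℂ) x

theorem isPositive_one_sub_iff (T : H₁ →L[ℂ] H) :
    (1 - T ∘L adjoint T).IsPositive ↔ ∀ x, ‖adjoint T x‖ ^ 2 ≤ ‖x‖ ^ 2 := by
  have hsa : (1 - T ∘L adjoint T).IsSymmetric :=
    (isPositive_one.isSymmetric).sub (isPositive_self_comp_adjoint T).isSymmetric
  rw [isPositive_def, and_iff_right hsa]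
  refine forall_congr' fun x => ?_
  rw [reApplyInnerSelf_apply, sub_apply, inner_sub_left, map_sub]
  change 0 ≤ (inner ℂ x x).re - (inner ℂ ((T ∘L adjoint T) x) x).re ↔ _
  rw [re_inner_self, re_inner_comp_adjoint, sub_nonneg]

theorem isPositive_one_sub_add_iff (T₁ : H₁ →L[ℂ] H) (T₂ : H₂ →L[ℂ] H) :
    (1 - (T₁ ∘L adjoint T₁ + T₂ ∘L adjoint T₂)).IsPositive ↔
      ∀ x, ‖adjoint T₁ x‖ ^ 2 + ‖adjoint T₂ x‖ ^ 2 ≤ ‖x‖ ^ 2 := by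
  have hsa : (1 - (T₁ ∘L adjoint T₁ + T₂ ∘L adjoint T₂)).IsSymmetric :=
    (isPositive_one.isSymmetric).sub ((isPositive_self_comp_adjoint T₁).add
      (isPositive_self_comp_adjoint T₂)).isSymmetric
  rw [isPositive_def, and_iff_right hsa]
  refine forall_congr' fun x => ?_
  rw [reApplyInnerSelf_apply, sub_apply, add_apply, inner_sub_left, inner_add_left, map_sub,
    map_add]
  change 0 ≤ (inner ℂ x x).re - ((inner ℂ ((T₁ ∘L adjoint T₁) x) x).re +
    (inner ℂ ((T₂ ∘L adjoint T₂) x) x).re) ↔ _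
  rw [re_inner_self, re_inner_comp_adjoint, re_inner_comp_adjoint, sub_nonneg]

theorem norm_sq_defect {D : H →L[ℂ] H} (hD : D.IsPositive) {T : H₁ →L[ℂ] H}
    (h : D ∘L D = 1 - T ∘L adjoint T) (x : H) :
    ‖D x‖ ^ 2 = ‖x‖ ^ 2 - ‖adjoint T x‖ ^ 2 := by
  have hDa : adjoint D = D := hD.isSelfAdjoint.adjoint_eq
  have h1 := re_inner_comp_adjoint D x
  rw [hDa, h, sub_apply, inner_sub_left, Complex.sub_re, re_inner_comp_adjoint] at h1
  rw [← h1, ← re_inner_self x]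
  rfl

theorem norm_adjoint_apply_le {T : H₁ →L[ℂ] H} (hT : ‖T‖ ≤ 1) (x : H) :
    ‖adjoint T x‖ ≤ ‖x‖ := by
  have h : ‖adjoint T‖ ≤ 1 := by rwa [LinearIsometryEquiv.norm_map]
  simpa using (adjoint T).le_of_opNorm_le h x

theorem norm_le_one_of_adjoint {T : H₁ →L[ℂ] H} (h : ∀ x, ‖adjoint T x‖ ≤ ‖x‖) : ‖T‖ ≤ 1 := by
  rw [← LinearIsometryEquiv.norm_map adjoint T]
  exact opNorm_le_bound _ zero_le_one (by simpa using h)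

/-- Douglas' factorization lemma. The map `A†x ↦ B†x` is well defined and contractive on the range
of `A†`; it extends to the closure of that range and, by zero, to the whole space. The adjoint of
the extension is the required factor. -/
theorem exists_contraction_factor (A : H₁ →L[ℂ] H) (B : H₂ →L[ℂ] H)
    (h : ∀ x, ‖adjoint B x‖ ≤ ‖adjoint A x‖) :
    ∃ Γ : H₂ →L[ℂ] H₁, ‖Γ‖ ≤ 1 ∧ B = A ∘L Γ := by
  let R : Submodule ℂ H₁ := (adjoint A).toLinearMap.range
  let K : Submodule ℂ H₁ := R.topologicalClosure
  have : CompleteSpace K := R.isClosed_topologicalClosure.completeSpace_coe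
  have hmem : ∀ x, (adjoint A).toLinearMap x ∈ K := fun x =>
    R.le_topologicalClosure ⟨x, rfl⟩
  let e : H →ₗ[ℂ] K := (adjoint A).toLinearMap.codRestrict K hmem
  have hdense : DenseRange e := by
    intro y
    rw [closure_subtype]
    have : (Subtype.val '' Set.range e : Set H₁) = R := by
      ext z
      constructor
      · rintro ⟨_, ⟨x, rfl⟩, rfl⟩
        exact ⟨x, rfl⟩
      · rintro ⟨x, rfl⟩
        exact ⟨e x, ⟨x, rfl⟩, rfl⟩
    rw [this]
    exact y.2
  have hbound : ∀ x, ‖(adjoint B).toLinearMap x‖ ≤ 1 * ‖e x‖ := fun x => by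
    rw [one_mul]; exact h x
  let C : K →L[ℂ] H₂ := (adjoint B).toLinearMap.extendOfNorm e
  have hC : ∀ x, C (e x) = adjoint B x := fun x =>
    LinearMap.extendOfNorm_eq hdense ⟨1, hbound⟩ x
  have hCn : ∀ y, ‖C y‖ ≤ ‖y‖ := fun y => by
    simpa using LinearMap.norm_extendOfNorm_apply_le hdense 1 hbound y
  let G : H₁ →L[ℂ] H₂ := C ∘L K.orthogonalProjectionOnto
  refine ⟨adjoint G, ?_, ?_⟩
  · rw [LinearIsometryEquiv.norm_map]
    refine opNorm_le_bound _ zero_le_one fun y => ?_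
    rw [one_mul]
    exact (hCn _).trans (K.norm_orthogonalProjectionOnto_apply_le y)
  · apply (adjoint (𝕜 := ℂ) (E := H₂) (F := H)).injective
    rw [adjoint_comp, adjoint_adjoint]
    ext x
    change adjoint B x = C (K.orthogonalProjectionOnto ((e x : K) : H₁))
    rw [Submodule.orthogonalProjectionOnto_mem_subspace_eq_self, hC]

end RowContraction

theorem row_contraction_two_iff
    {H H₁ H₂ : Type*}
    [NormedAddCommGroup H] [InnerProductSpace ℂ H] [CompleteSpace H]
    [NormedAddCommGroup H₁] [InnerProductSpace ℂ H₁] [CompleteSpace H₁]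
    [NormedAddCommGroup H₂] [InnerProductSpace ℂ H₂] [CompleteSpace H₂]
    (T₁ : H₁ →L[ℂ] H) (T₂ : H₂ →L[ℂ] H) :
    (1 - (T₁ ∘L ContinuousLinearMap.adjoint T₁ + T₂ ∘L ContinuousLinearMap.adjoint T₂)).IsPositive ↔
      (‖T₁‖ ≤ 1 ∧ ∃ D : H →L[ℂ] H, D.IsPositive ∧
        D ∘L D = 1 - T₁ ∘L ContinuousLinearMap.adjoint T₁ ∧
        ∃ Γ₂ : H₂ →L[ℂ] H, ‖Γ₂‖ ≤ 1 ∧ T₂ = D ∘L Γ₂) := by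
  rw [isPositive_one_sub_add_iff]
  constructor
  · intro h
    have h1 : ∀ x, ‖adjoint T₁ x‖ ^ 2 ≤ ‖x‖ ^ 2 := fun x => by
      nlinarith [h x, sq_nonneg ‖adjoint T₂ x‖]
    have hpos : 0 ≤ 1 - T₁ ∘L adjoint T₁ :=
      (nonneg_iff_isPositive _).2 ((isPositive_one_sub_iff T₁).2 h1)
    have hD : (CFC.sqrt (1 - T₁ ∘L adjoint T₁)).IsPositive :=
      (nonneg_iff_isPositive _).1 (CFC.sqrt_nonneg _)
    have hDD : CFC.sqrt (1 - T₁ ∘L adjoint T₁) ∘L CFC.sqrt (1 - T₁ ∘L adjoint T₁) =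
        1 - T₁ ∘L adjoint T₁ := CFC.sqrt_mul_sqrt_self _ hpos
    refine ⟨norm_le_one_of_adjoint fun x => le_of_sq_le_sq (h1 x) (norm_nonneg _), _, hD, hDD,
      exists_contraction_factor _ _ fun x => ?_⟩
    rw [hD.isSelfAdjoint.adjoint_eq]
    refine le_of_sq_le_sq ?_ (norm_nonneg _)
    rw [norm_sq_defect hD hDD]
    linarith [h x]
  · rintro ⟨-, D, hD, hDD, Γ, hΓ, rfl⟩ x
    have h2 : ‖adjoint (D ∘L Γ) x‖ ≤ ‖D x‖ := by
      rw [adjoint_comp, hD.isSelfAdjoint.adjoint_eq]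
      exact norm_adjoint_apply_le hΓ (D x)
    have h3 := pow_le_pow_left₀ (norm_nonneg _) h2 2
    rw [norm_sq_defect hD hDD] at h3
    linarith
end

section
/- Let K and H i (i : Fin n) be complex Hilbert spaces, let Γ i : H i →L[ℂ] K be contractions, and define T k = D_{(Γ 0)†} ∘ ⋯ ∘ D_{(Γ (k−1))†} ∘ Γ k for each k : Fin n, where D_{(Γ j)†} = √(1 − Γ j ∘ (Γ j)†). Then the defect of the row contraction T = [T 0, …, T (n−1)] satisfies 1 − ∑ k, T k ∘ (T k)† = P ∘ P†, where P = D_{(Γ 0)†} ∘ D_{(Γ 1)†} ∘ ⋯ ∘ D_{(Γ (n−1))†} : K →L[ℂ] K. -/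
/-!
Write `S m` for the product of the first `m` defect operators `D 0, …, D (m - 1)`. Since `D k` is
self-adjoint with square `1 - Γ k ∘ (Γ k)†`, the `k`-th summand telescopes:
`T k ∘ (T k)† = S k ∘ (1 - D k ∘ D k) ∘ (S k)† = S k ∘ (S k)† - S (k + 1) ∘ (S (k + 1))†`.
Summing over `k` leaves `S 0 ∘ (S 0)† - S n ∘ (S n)†`, where `S 0 = 1` and `S n` is the full product.
-/

open ContinuousLinearMap

theorem row_contraction_defect_factorization
    {n : ℕ} {K : Type*} {H : Fin n → Type*}
    [NormedAddCommGroup K] [InnerProductSpace ℂ K] [CompleteSpace K]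
    [∀ i, NormedAddCommGroup (H i)] [∀ i, InnerProductSpace ℂ (H i)]
    [∀ i, CompleteSpace (H i)]
    (Γ : ∀ i, H i →L[ℂ] K) (hΓ : ∀ i, ‖Γ i‖ ≤ 1)
    (D : Fin n → (K →L[ℂ] K))
    (hD : ∀ i, (D i).IsPositive ∧
      D i ∘L D i = 1 - Γ i ∘L ContinuousLinearMap.adjoint (Γ i))
    (T : ∀ i, H i →L[ℂ] K)
    (hT : ∀ k : Fin n, T k = (((List.finRange n).take (k : ℕ)).map D).prod ∘L Γ k) :
    1 - ∑ k, T k ∘L ContinuousLinearMap.adjoint (T k) =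
      ((List.finRange n).map D).prod ∘L
        ContinuousLinearMap.adjoint (((List.finRange n).map D).prod) := by
  set S : ℕ → (K →L[ℂ] K) := fun m => (((List.finRange n).take m).map D).prod with hS
  have hsucc : ∀ k : Fin n, S (k + 1) = S k * D k := by
    intro k
    have hk : (k : ℕ) < (List.finRange n).length := by simp
    simp only [hS, List.take_succ_eq_append_getElem hk, List.map_append, List.prod_append]
    simp
  have hterm : ∀ k : Fin n, T k ∘L adjoint (T k) =
      S k * adjoint (S k) - S (k + 1) * adjoint (S (k + 1)) := by
    intro k
    have hTk : T k = S k ∘L Γ k := hT k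
    have hsa : star (D k) = D k := (hD k).1.isSelfAdjoint
    have hΓΓ : Γ k ∘L adjoint (Γ k) = 1 - D k * D k := by
      have h := (hD k).2
      rw [← mul_def] at h
      rw [h, sub_sub_cancel]
    calc T k ∘L adjoint (T k)
        = S k * (Γ k ∘L adjoint (Γ k)) * adjoint (S k) := by
          rw [hTk, adjoint_comp]; rfl
      _ = S k * adjoint (S k) - S (k + 1) * adjoint (S (k + 1)) := by
          rw [hΓΓ, hsucc, ← star_eq_adjoint, ← star_eq_adjoint, star_mul, hsa]
          noncomm_ring
  have hS0 : S 0 = 1 := by simp [hS]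
  have hSn : S n = ((List.finRange n).map D).prod := by
    simp only [hS]
    rw [List.take_of_length_le (by simp)]
  rw [Finset.sum_congr rfl fun k _ => hterm k,
    Fin.sum_univ_eq_sum_range
      (fun m => S m * adjoint (S m) - S (m + 1) * adjoint (S (m + 1))) n,
    Finset.sum_range_sub' (fun m => S m * adjoint (S m)) n, hS0, ← hSn, ← star_eq_adjoint, star_one,
    one_mul, sub_sub_cancel]
  rfl
end

section
/- Let K and H i (i : Fin n) be complex Hilbert spaces and T i : K →L[ℂ] H i bounded operators. Then ∑ i, (T i)† ∘ T i ≤ 1 (i.e. the column operator with components T i is a contraction) if and only if there exist contractions Γ i : K →L[ℂ] H i such that T 0 = Γ 0 and for every k, T k = Γ k ∘ D_{Γ (k−1)} ∘ ⋯ ∘ D_{Γ 0}, where D_{Γ j} = √(1 − (Γ j)† ∘ Γ j) : K →L[ℂ] K. Moreover, in that case 1 − ∑ k, (T k)† ∘ T k = Q ∘ Q†, where Q = D_{Γ 0} ∘ D_{Γ 1} ∘ ⋯ ∘ D_{Γ (n−1)}. -/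
/-!
Write `P m = D_{m-1} ⋯ D_0` for the partial products of the defect operators. The identity
`(P m)† P m = 1 - ∑_{k < m} (T k)† T k` holds by induction on `m`: since `T m = Γ_m P m` and
`D_m² = 1 - Γ_m† Γ_m`, one has `(P (m+1))† P (m+1) = (P m)† D_m² P m = (P m)† P m - (T m)† T m`
(`partialDefect_identity`). At `m = n` this is the formula `1 - ∑ (T k)† T k = Q Q†` with
`Q = (P n)†`, and it shows that a column of the given form is a contraction.

Conversely, let the column be a contraction and suppose `Γ_0, …, Γ_{m-1}` have been found. The
same identity and positivity of `1 - ∑ (T k)† T k` give `(T m)† T m ≤ (P m)† P m`, that is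
`‖T m x‖ ≤ ‖P m x‖` for all `x`, so Douglas' factorization lemma (`exists_contraction_factor`)
produces a contraction `Γ_m` with `T m = Γ_m P m`.
-/

open ContinuousLinearMap

/-- The operator inequality `A† A ≤ B† B`, tested on vectors. -/
theorem isPositive_adjoint_sub_iff {E F G : Type*}
    [NormedAddCommGroup E] [InnerProductSpace ℂ E] [CompleteSpace E]
    [NormedAddCommGroup F] [InnerProductSpace ℂ F] [CompleteSpace F]
    [NormedAddCommGroup G] [InnerProductSpace ℂ G] [CompleteSpace G]
    (A : E →L[ℂ] F) (B : E →L[ℂ] G) :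
    (adjoint B ∘L B - adjoint A ∘L A).IsPositive ↔ ∀ x, ‖A x‖ ≤ ‖B x‖ := by
  have key : ∀ x, (adjoint B ∘L B - adjoint A ∘L A).reApplyInnerSelf x
      = ‖B x‖ ^ 2 - ‖A x‖ ^ 2 := by
    intro x
    rw [reApplyInnerSelf_apply, sub_apply, inner_sub_left, map_sub,
      ← apply_norm_sq_eq_inner_adjoint_left, ← apply_norm_sq_eq_inner_adjoint_left]
  constructor
  · intro h x
    have := h.2 x
    rw [key] at this
    exact le_of_sq_le_sq (by linarith) (norm_nonneg _)
  · intro h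
    refine ⟨?_, fun x => ?_⟩
    · exact (isPositive_adjoint_comp_self B).1.sub (isPositive_adjoint_comp_self A).1
    · rw [key]
      have := pow_le_pow_left₀ (norm_nonneg _) (h x) 2
      linarith

/-- Douglas' factorization lemma: if `‖A x‖ ≤ ‖B x‖` for all `x`, then `A` factors through `B`
by a contraction. The factor is defined on the closure of the range of `B` by continuity, and is
zero on the orthogonal complement. -/
theorem exists_contraction_factor_s7 {E F G : Type*}
    [NormedAddCommGroup E] [InnerProductSpace ℂ E]
    [NormedAddCommGroup F] [InnerProductSpace ℂ F] [CompleteSpace F]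
    [NormedAddCommGroup G] [InnerProductSpace ℂ G] [CompleteSpace G]
    (A : E →L[ℂ] F) (B : E →L[ℂ] G) (h : ∀ x, ‖A x‖ ≤ ‖B x‖) :
    ∃ Γ : G →L[ℂ] F, ‖Γ‖ ≤ 1 ∧ A = Γ ∘L B := by
  let M : Submodule ℂ G := (LinearMap.range B.toLinearMap).topologicalClosure
  have hM : IsClosed (M : Set G) := Submodule.isClosed_topologicalClosure _
  have : CompleteSpace M := hM.completeSpace_coe
  have hmem : ∀ x, B x ∈ M := fun x => Submodule.le_topologicalClosure _ ⟨x, rfl⟩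
  let e : E →ₗ[ℂ] M := B.toLinearMap.codRestrict M hmem
  have hdense : DenseRange e := by
    have h1 : (Subtype.val '' Set.range e : Set G) = Set.range B := by
      rw [← Set.range_comp]; rfl
    intro y
    have h2 : (y : G) ∈ closure (Subtype.val '' Set.range e : Set G) := by
      rw [h1]
      exact y.2
    rw [Topology.IsInducing.subtypeVal.closure_eq_preimage_closure_image]
    exact h2
  have hnorm : ∀ x, ‖A.toLinearMap x‖ ≤ 1 * ‖e x‖ := by
    intro x
    rw [one_mul]
    exact h x
  let C : M →L[ℂ] F := A.toLinearMap.extendOfNorm e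
  have hC : ‖C‖ ≤ 1 := LinearMap.opNorm_extendOfNorm_le hdense zero_le_one hnorm
  refine ⟨C ∘L M.orthogonalProjectionOnto, ?_, ?_⟩
  · calc ‖C ∘L M.orthogonalProjectionOnto‖ ≤ ‖C‖ * ‖M.orthogonalProjectionOnto‖ :=
          opNorm_comp_le _ _
      _ ≤ 1 * 1 := by
          gcongr
          exact M.orthogonalProjectionOnto_norm_le
      _ = 1 := one_mul 1
  · ext x
    have h2 : M.orthogonalProjectionOnto (B x) = e x :=
      Submodule.orthogonalProjectionOnto_mem_subspace_eq_self (e x)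
    rw [comp_apply, comp_apply, h2]
    exact (LinearMap.extendOfNorm_eq hdense ⟨1, hnorm⟩ x).symm

theorem exists_defect {K H : Type*}
    [NormedAddCommGroup K] [InnerProductSpace ℂ K] [CompleteSpace K]
    [NormedAddCommGroup H] [InnerProductSpace ℂ H] [CompleteSpace H]
    (Γ : K →L[ℂ] H) (hΓ : ‖Γ‖ ≤ 1) :
    ∃ D : K →L[ℂ] K, D.IsPositive ∧ D ∘L D = 1 - adjoint Γ ∘L Γ := by
  have hp : (1 - adjoint Γ ∘L Γ).IsPositive := by
    have := (isPositive_adjoint_sub_iff Γ (1 : K →L[ℂ] K)).2 fun x => by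
      simpa using Γ.le_of_opNorm_le hΓ x
    have h1 : adjoint (1 : K →L[ℂ] K) ∘L (1 : K →L[ℂ] K) = 1 := by
      rw [one_def, adjoint_id, comp_id]
    rwa [h1] at this
  have h0 : 0 ≤ 1 - adjoint Γ ∘L Γ := (nonneg_iff_isPositive _).2 hp
  exact ⟨CFC.sqrt (1 - adjoint Γ ∘L Γ), (nonneg_iff_isPositive _).1 (CFC.sqrt_nonneg _),
    CFC.sqrt_mul_sqrt_self _ h0⟩

/-- The partial product `D_{m-1} ⋯ D_0`, with the earliest factor applied first; for `m ≥ n` it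
is the full product. -/
def partialDefect {n : ℕ} {R : Type*} [Monoid R] (D : Fin n → R) (m : ℕ) : R :=
  ((((List.finRange n).take m).map D).reverse).prod

theorem partialDefect_zero {n : ℕ} {R : Type*} [Monoid R] (D : Fin n → R) :
    partialDefect D 0 = 1 := by
  simp [partialDefect]

theorem partialDefect_succ {n : ℕ} {R : Type*} [Monoid R] (D : Fin n → R) (m : ℕ) (hm : m < n) :
    partialDefect D (m + 1) = D ⟨m, hm⟩ * partialDefect D m := by
  have h : m < (List.finRange n).length := by simpa using hm
  rw [partialDefect, List.take_succ_eq_append_getElem h]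
  simp [partialDefect]

theorem partialDefect_congr {n : ℕ} {R : Type*} [Monoid R] (D D' : Fin n → R) (m : ℕ)
    (hm : m ≤ n) (h : ∀ i : Fin n, (i : ℕ) < m → D i = D' i) :
    partialDefect D m = partialDefect D' m := by
  induction m with
  | zero => simp [partialDefect_zero]
  | succ m ih =>
    rw [partialDefect_succ D m hm, partialDefect_succ D' m hm, h ⟨m, hm⟩ (Nat.lt_succ_self m),
      ih (Nat.le_of_succ_le hm) fun i hi => h i (Nat.lt_succ_of_lt hi)]

/-- The telescoping identity `(P m)† P m = 1 - ∑_{k < m} (T k)† T k`. -/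
theorem partialDefect_identity {n : ℕ} {K : Type*} {H : Fin n → Type*}
    [NormedAddCommGroup K] [InnerProductSpace ℂ K] [CompleteSpace K]
    [∀ i, NormedAddCommGroup (H i)] [∀ i, InnerProductSpace ℂ (H i)]
    [∀ i, CompleteSpace (H i)]
    (T Γ : ∀ i, K →L[ℂ] H i) (D : Fin n → (K →L[ℂ] K))
    (hD : ∀ i, (D i).IsPositive ∧ D i ∘L D i = 1 - adjoint (Γ i) ∘L Γ i)
    (m : ℕ) (hm : m ≤ n)
    (hT : ∀ k : Fin n, (k : ℕ) < m → T k = Γ k ∘L partialDefect D k) :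
    adjoint (partialDefect D m) ∘L partialDefect D m =
      1 - ∑ k ∈ Finset.univ.filter (fun k : Fin n => (k : ℕ) < m), adjoint (T k) ∘L T k := by
  induction m with
  | zero =>
    simp [partialDefect_zero, one_def, adjoint_id]
  | succ m ih =>
    have ih := ih (Nat.le_of_succ_le hm) fun k hk => hT k (Nat.lt_succ_of_lt hk)
    have hset : (Finset.univ.filter fun k : Fin n => (k : ℕ) < m + 1)
        = insert ⟨m, hm⟩ (Finset.univ.filter fun k : Fin n => (k : ℕ) < m) := by
      ext k
      simp only [Finset.mem_filter, Finset.mem_univ, true_and, Finset.mem_insert, Fin.ext_iff]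
      omega
    rw [hset, Finset.sum_insert (by simp), hT ⟨m, hm⟩ (Nat.lt_succ_self m),
      partialDefect_succ D m hm, sub_add_eq_sub_sub_swap, ← ih, mul_def, adjoint_comp, adjoint_comp,
      (hD ⟨m, hm⟩).1.isSelfAdjoint.adjoint_eq]
    have h2 := (hD ⟨m, hm⟩).2
    calc _ = adjoint (partialDefect D m) ∘L (D ⟨m, hm⟩ ∘L D ⟨m, hm⟩) ∘L partialDefect D m := rfl
      _ = _ := by
        rw [h2, sub_comp, comp_sub]
        rfl

/-- The contractions `Γ_0, …, Γ_{m-1}` can be constructed one after another; the remaining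
entries of the families are arbitrary. -/
theorem exists_partial_parametrization {n : ℕ} {K : Type*} {H : Fin n → Type*}
    [NormedAddCommGroup K] [InnerProductSpace ℂ K] [CompleteSpace K]
    [∀ i, NormedAddCommGroup (H i)] [∀ i, InnerProductSpace ℂ (H i)]
    [∀ i, CompleteSpace (H i)]
    (T : ∀ i, K →L[ℂ] H i)
    (hpos : (1 - ∑ i, adjoint (T i) ∘L T i).IsPositive) (m : ℕ) (hm : m ≤ n) :
    ∃ Γ : ∀ i, K →L[ℂ] H i, (∀ i, ‖Γ i‖ ≤ 1) ∧ ∃ D : Fin n → (K →L[ℂ] K),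
      (∀ i, (D i).IsPositive ∧ D i ∘L D i = 1 - adjoint (Γ i) ∘L Γ i) ∧
      ∀ k : Fin n, (k : ℕ) < m → T k = Γ k ∘L partialDefect D k := by
  induction m with
  | zero =>
    refine ⟨fun _ => 0, fun i => by simp, fun _ => 1, fun i => ⟨isPositive_one, ?_⟩,
      fun k hk => absurd hk (Nat.not_lt_zero _)⟩
    rw [comp_zero, sub_zero]
    rfl
  | succ m ih =>
    obtain ⟨Γ, hΓ, D, hD, hT⟩ := ih (Nat.le_of_succ_le hm)
    have hid := partialDefect_identity T Γ D hD m (Nat.le_of_succ_le hm) hT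
    have hle : ∀ x, ‖T ⟨m, hm⟩ x‖ ≤ ‖partialDefect D m x‖ := by
      rw [← isPositive_adjoint_sub_iff, hid]
      -- The missing terms of the full sum, those with index beyond `m`, are positive.
      have hsplit : 1 - ∑ k ∈ Finset.univ.filter (fun k : Fin n => (k : ℕ) < m), adjoint (T k) ∘L T k
            - adjoint (T ⟨m, hm⟩) ∘L T ⟨m, hm⟩
          = (1 - ∑ i, adjoint (T i) ∘L T i) +
            ∑ k ∈ (Finset.univ.filter fun k : Fin n => ¬ (k : ℕ) < m).erase ⟨m, hm⟩,
              adjoint (T k) ∘L T k := by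
        have h1 := Finset.sum_filter_add_sum_filter_not Finset.univ (fun k : Fin n => (k : ℕ) < m)
          (fun k => adjoint (T k) ∘L T k)
        have h2 := Finset.add_sum_erase (Finset.univ.filter fun k : Fin n => ¬ (k : ℕ) < m)
          (fun k => adjoint (T k) ∘L T k) (a := ⟨m, hm⟩) (by simp)
        rw [← h1, ← h2]
        abel
      rw [hsplit, ← nonneg_iff_isPositive]
      exact add_nonneg ((nonneg_iff_isPositive _).2 hpos)
        (Finset.sum_nonneg fun k _ => (nonneg_iff_isPositive _).2 (isPositive_adjoint_comp_self _))
    obtain ⟨G, hG, hTG⟩ := exists_contraction_factor_s7 _ _ hle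
    obtain ⟨E, hE⟩ := exists_defect G hG
    have hupd : ∀ k ≤ m, partialDefect (Function.update D ⟨m, hm⟩ E) k = partialDefect D k := by
      intro k hk
      refine partialDefect_congr _ _ _ (by omega) fun i hi => ?_
      rw [Function.update_of_ne]
      rintro rfl
      simp only at hi
      omega
    refine ⟨Function.update Γ ⟨m, hm⟩ G, fun i => ?_, Function.update D ⟨m, hm⟩ E, fun i => ?_,
      fun k hk => ?_⟩
    · rcases eq_or_ne i ⟨m, hm⟩ with rfl | hi
      · simpa using hG
      · simpa [hi] using hΓ i
    · rcases eq_or_ne i ⟨m, hm⟩ with rfl | hi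
      · simpa using hE
      · simpa [hi] using hD i
    · rw [hupd k (by omega)]
      rcases eq_or_ne k ⟨m, hm⟩ with rfl | hi
      · simpa using hTG
      · have : (k : ℕ) ≠ m := fun h => hi (Fin.ext h)
        simpa [hi] using hT k (by omega)

theorem adjoint_partialDefect {n : ℕ} {K : Type*}
    [NormedAddCommGroup K] [InnerProductSpace ℂ K] [CompleteSpace K]
    (D : Fin n → (K →L[ℂ] K)) (hD : ∀ i, (D i).IsPositive) :
    adjoint ((List.finRange n).map D).prod = partialDefect D n := by
  have h : ∀ l : List (Fin n), adjoint (l.map D).prod = ((l.map D).reverse).prod := by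
    intro l
    induction l with
    | nil => simp [one_def, adjoint_id]
    | cons a l ih =>
      rw [List.map_cons, List.prod_cons, mul_def, adjoint_comp, ih,
        (hD a).isSelfAdjoint.adjoint_eq, List.reverse_cons, List.prod_append, List.prod_singleton,
        mul_def]
  rw [h, partialDefect, List.take_of_length_le (by simp)]

/-- The defect formula `1 - ∑ (T k)† T k = Q Q†` for `Q = D_0 ⋯ D_{n-1}`. -/
theorem one_sub_sum_eq {n : ℕ} {K : Type*} {H : Fin n → Type*}
    [NormedAddCommGroup K] [InnerProductSpace ℂ K] [CompleteSpace K]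
    [∀ i, NormedAddCommGroup (H i)] [∀ i, InnerProductSpace ℂ (H i)]
    [∀ i, CompleteSpace (H i)]
    (T Γ : ∀ i, K →L[ℂ] H i) (D : Fin n → (K →L[ℂ] K))
    (hD : ∀ i, (D i).IsPositive ∧ D i ∘L D i = 1 - adjoint (Γ i) ∘L Γ i)
    (hT : ∀ k : Fin n, T k = Γ k ∘L partialDefect D k) :
    1 - ∑ k, adjoint (T k) ∘L T k =
      ((List.finRange n).map D).prod ∘L adjoint ((List.finRange n).map D).prod := by
  have h := partialDefect_identity T Γ D hD n le_rfl fun k _ => hT k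
  rw [← adjoint_partialDefect D fun i => (hD i).1, adjoint_adjoint] at h
  rw [h]
  simp

theorem column_contraction_parametrization
    {n : ℕ} {K : Type*} {H : Fin n → Type*}
    [NormedAddCommGroup K] [InnerProductSpace ℂ K] [CompleteSpace K]
    [∀ i, NormedAddCommGroup (H i)] [∀ i, InnerProductSpace ℂ (H i)]
    [∀ i, CompleteSpace (H i)]
    (T : ∀ i, K →L[ℂ] H i) :
    ((1 - ∑ i, ContinuousLinearMap.adjoint (T i) ∘L T i).IsPositive ↔
      ∃ Γ : ∀ i, K →L[ℂ] H i, (∀ i, ‖Γ i‖ ≤ 1) ∧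
        ∃ D : Fin n → (K →L[ℂ] K),
          (∀ i, (D i).IsPositive ∧
            D i ∘L D i = 1 - ContinuousLinearMap.adjoint (Γ i) ∘L Γ i) ∧
          ∀ k : Fin n,
            T k = Γ k ∘L ((((List.finRange n).take (k : ℕ)).map D).reverse).prod) ∧
    (∀ (Γ : ∀ i, K →L[ℂ] H i), (∀ i, ‖Γ i‖ ≤ 1) →
      ∀ D : Fin n → (K →L[ℂ] K),
        (∀ i, (D i).IsPositive ∧
          D i ∘L D i = 1 - ContinuousLinearMap.adjoint (Γ i) ∘L Γ i) →
        (∀ k : Fin n,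
          T k = Γ k ∘L ((((List.finRange n).take (k : ℕ)).map D).reverse).prod) →
        1 - ∑ k, ContinuousLinearMap.adjoint (T k) ∘L T k =
          ((List.finRange n).map D).prod ∘L
            ContinuousLinearMap.adjoint (((List.finRange n).map D).prod)) := by
  refine ⟨⟨fun h => ?_, ?_⟩, fun Γ _ D hD hT => one_sub_sum_eq T Γ D hD hT⟩
  · obtain ⟨Γ, hΓ, D, hD, hT⟩ := exists_partial_parametrization T h n le_rfl
    exact ⟨Γ, hΓ, D, hD, fun k => hT k k.2⟩
  · rintro ⟨Γ, -, D, hD, hT⟩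
    rw [one_sub_sum_eq T Γ D hD hT]
    exact isPositive_self_comp_adjoint _
end

section
/- Let H₁, H₂, K₁, K₂ be complex Hilbert spaces and A : H₁ →L[ℂ] K₁, B : H₂ →L[ℂ] K₁, C : H₁ →L[ℂ] K₂, D : H₂ →L[ℂ] K₂. Then the 2×2 block operator is a contraction, i.e. ‖A h₁ + B h₂‖² + ‖C h₁ + D h₂‖² ≤ ‖h₁‖² + ‖h₂‖² for all h₁ ∈ H₁, h₂ ∈ H₂, if and only if ‖A‖ ≤ 1 and there exist contractions Γ₂ : H₂ →L[ℂ] K₁, Γ₃ : H₁ →L[ℂ] K₂, Γ₄ : H₂ →L[ℂ] K₂ such that B = D_{A†} ∘ Γ₂, C = Γ₃ ∘ D_A, and D = −Γ₃ ∘ A† ∘ Γ₂ + D_{Γ₃†} ∘ Γ₄ ∘ D_{Γ₂}. -/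
/-!
Write `S = D_A`, `P = D_{A†}`. Both directions rest on the intertwining relation `A S = P A`
(`defect_intertwine`), which gives, for `g = Γ₂ h₂` (`row_defect_identity`),
`‖h₁‖² + ‖g‖² - ‖A h₁ + P g‖² = ‖S h₁ - A† g‖²`.
So when `B = P Γ₂` and `C = Γ₃ S`, setting `T = D + Γ₃ A† Γ₂`, the block operator is a contraction
if and only if
`‖Γ₃ u + T h₂‖² ≤ ‖u‖² + ‖D_{Γ₂} h₂‖²` for all `u` of the form `S h₁ - A† Γ₂ h₂`.

If `T = D_{Γ₃†} Γ₄ D_{Γ₂}`, this holds for every `u`, because `Γ₃ Γ₃† + D_{Γ₃†}² = 1` makes the row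
`[Γ₃ D_{Γ₃†}]` a contraction.

Conversely, if the block operator is a contraction, Douglas' lemma (`exists_douglas_factor`)
applied to the first column and to the adjoint of the first row gives `Γ₃` and `Γ₂`, normalized so
that `Γ₃` vanishes on `(ran S)ᗮ` and `Γ₂` maps into the closure of `ran P`. Then `A† Γ₂ h₂` lies in
the closure of `ran S`, and the estimate extends to all `u` (`bound_of_bound_on_range`). Taking
`u = 0`, Douglas' lemma gives `T = Z D_{Γ₂}`; the same extension argument shows that `[Γ₃ Z]` is a
row contraction, so `‖Z† k‖² ≤ ‖k‖² - ‖Γ₃† k‖² = ‖D_{Γ₃†} k‖²`, and Douglas' lemma once more gives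
`Z = D_{Γ₃†} Γ₄`.
-/

open ContinuousLinearMap

/-- A defect operator exists for every contraction: `1 - T†T` has a positive square root. -/
lemma exists_defect_s8 {E F : Type*}
    [NormedAddCommGroup E] [InnerProductSpace ℂ E] [CompleteSpace E]
    [NormedAddCommGroup F] [InnerProductSpace ℂ F] [CompleteSpace F]
    (T : E →L[ℂ] F) (hT : ‖T‖ ≤ 1) :
    ∃ S : E →L[ℂ] E, S.IsPositive ∧ S ∘L S = 1 - adjoint T ∘L T := by
  have h0 : 0 ≤ 1 - adjoint T ∘L T := by
    rw [nonneg_iff_isPositive, isPositive_def']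
    refine ⟨?_, fun x => ?_⟩
    · rw [isSelfAdjoint_iff', map_sub, adjoint_comp, adjoint_adjoint, ← star_eq_adjoint, star_one]
    · have h : ‖T x‖ ≤ ‖x‖ := by simpa using T.le_of_opNorm_le hT x
      have h' : ‖T x‖ ^ 2 ≤ ‖x‖ ^ 2 := by gcongr
      simp only [reApplyInnerSelf_apply, sub_apply, comp_apply, inner_sub_left,
        adjoint_inner_left, map_sub, inner_self_eq_norm_sq]
      have h1 : RCLike.re (inner ℂ ((1 : E →L[ℂ] E) x) x) = ‖x‖ ^ 2 := inner_self_eq_norm_sq x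
      linarith
  exact ⟨CFC.sqrt _, (nonneg_iff_isPositive _).1 (CFC.sqrt_nonneg _),
    CFC.sqrt_mul_sqrt_self _ h0⟩

lemma norm_defect_sq {E F : Type*}
    [NormedAddCommGroup E] [InnerProductSpace ℂ E] [CompleteSpace E]
    [NormedAddCommGroup F] [InnerProductSpace ℂ F] [CompleteSpace F]
    {T : E →L[ℂ] F} {S : E →L[ℂ] E} (hS : S.IsPositive)
    (h : S ∘L S = 1 - adjoint T ∘L T) (x : E) :
    ‖S x‖ ^ 2 = ‖x‖ ^ 2 - ‖T x‖ ^ 2 := by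
  have h1 : S (S x) = x - adjoint T (T x) := by simpa using congr($h x)
  have h2 : inner ℂ (S x) (S x) = inner ℂ x x - inner ℂ (T x) (T x) := by
    rw [hS.inner_left_eq_inner_right, h1, inner_sub_right, adjoint_inner_right]
  have h3 := congr(RCLike.re $h2)
  simpa only [map_sub, inner_self_eq_norm_sq] using h3

/-- The intertwining relation `A D_A = D_{A†} A`, for any positive square roots.

The difference `X = A D_A - D_{A†} A` satisfies `D_{A†} X = - X D_A`, hence
`D_{A†} (X X†) = - X D_A X† ≤ 0`. This operator is self-adjoint, so its two positive factors
commute and their product is also `≥ 0`; it vanishes, and this forces `X = 0`. -/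
lemma defect_intertwine {E F : Type*}
    [NormedAddCommGroup E] [InnerProductSpace ℂ E] [CompleteSpace E]
    [NormedAddCommGroup F] [InnerProductSpace ℂ F] [CompleteSpace F]
    {A : E →L[ℂ] F} {S : E →L[ℂ] E} {P : F →L[ℂ] F}
    (hS : S.IsPositive) (hSS : S ∘L S = 1 - adjoint A ∘L A)
    (hP : P.IsPositive) (hPP : P ∘L P = 1 - A ∘L adjoint A) (x : E) :
    A (S x) = P (A x) := by
  obtain ⟨X, hX⟩ : ∃ X : E →L[ℂ] F, X = A ∘L S - P ∘L A := ⟨_, rfl⟩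
  have eS : ∀ x, S (S x) = x - adjoint A (A x) := fun x => by simpa using congr($hSS x)
  have eP : ∀ x, P (P x) = x - A (adjoint A x) := fun x => by simpa using congr($hPP x)
  have aS : adjoint S = S := hS.isSelfAdjoint.adjoint_eq
  have aP : adjoint P = P := hP.isSelfAdjoint.adjoint_eq
  have hPX : ∀ x, P (X x) = - X (S x) := fun x => by
    simp only [hX, sub_apply, comp_apply, map_sub, eS, eP]
    abel
  have hZ : (X ∘L S ∘L adjoint X).IsPositive := hS.conj_adjoint X
  have hQ : (X ∘L adjoint X).IsPositive := isPositive_self_comp_adjoint X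
  have hPQ : P * (X ∘L adjoint X) = - (X ∘L S ∘L adjoint X) := by
    ext k
    simp [hPX]
  have hcomm : Commute P (X ∘L adjoint X) := by
    have h := congr(adjoint $hPQ)
    rw [map_neg, hZ.isSelfAdjoint.adjoint_eq, ← hPQ, mul_def, adjoint_comp, aP,
      hQ.isSelfAdjoint.adjoint_eq] at h
    exact h.symm
  have hnn : 0 ≤ P * (X ∘L adjoint X) :=
    hcomm.mul_nonneg ((nonneg_iff_isPositive _).2 hP) ((nonneg_iff_isPositive _).2 hQ)
  have hzero : P * (X ∘L adjoint X) = 0 := by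
    refine le_antisymm ?_ hnn
    rw [hPQ, neg_nonpos]
    exact (nonneg_iff_isPositive _).2 hZ
  have hXP : ∀ k, adjoint X (P k) = 0 := fun k => by
    have h1 : P (X (adjoint X (P k))) = 0 := congr($hzero (P k))
    rw [← inner_self_eq_zero (𝕜 := ℂ), adjoint_inner_left, hP.inner_left_eq_inner_right, h1,
      inner_zero_right]
  have hPX0 : ∀ x, P (X x) = 0 := fun x => by
    rw [← inner_self_eq_zero (𝕜 := ℂ), hP.inner_left_eq_inner_right, ← adjoint_inner_right, hXP,
      inner_zero_right]
  have hXS0 : ∀ x, X (S x) = 0 := fun x => by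
    have := hPX x
    rw [hPX0] at this
    exact neg_eq_zero.1 this.symm
  have hSX : ∀ k, S (adjoint X k) = 0 := fun k => by
    rw [← inner_self_eq_zero (𝕜 := ℂ), hS.inner_left_eq_inner_right, adjoint_inner_left, hXS0,
      inner_zero_right]
  have hXX : ∀ k, adjoint X (X (adjoint X k)) = 0 := fun k => by
    have : X (adjoint X k) = - P (A (adjoint X k)) := by
      have h := congr($hX (adjoint X k))
      rwa [sub_apply, comp_apply, comp_apply, hSX, map_zero, zero_sub] at h
    rw [this, map_neg, hXP, neg_zero]
  have h1 : ∀ x, adjoint X (X x) = 0 := fun x => by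
    rw [← inner_self_eq_zero (𝕜 := ℂ), adjoint_inner_left, ← adjoint_inner_right, hXX,
      inner_zero_right]
  have h2 : X x = 0 := by
    rw [← inner_self_eq_zero (𝕜 := ℂ), ← adjoint_inner_left, h1, inner_zero_left]
  rw [hX] at h2
  exact sub_eq_zero.1 h2

/-- The sum of the range of `S` and its orthogonal complement, the kernel of `S†`, is dense. -/
lemma denseRange_coprod_ker {E L : Type*}
    [NormedAddCommGroup E] [InnerProductSpace ℂ E] [CompleteSpace E]
    [NormedAddCommGroup L] [InnerProductSpace ℂ L] [CompleteSpace L] (S : E →L[ℂ] L) :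
    DenseRange (S.toLinearMap.coprod (adjoint S).ker.subtype) := by
  have h : Dense ((S.toLinearMap.coprod (adjoint S).ker.subtype).range : Set L) := by
    rw [Submodule.dense_iff_topologicalClosure_eq_top, Submodule.topologicalClosure_eq_top_iff,
      Submodule.eq_bot_iff]
    intro v hv
    rw [Submodule.mem_orthogonal'] at hv
    have h1 : adjoint S v = 0 := by
      rw [← inner_self_eq_zero (𝕜 := ℂ), adjoint_inner_left]
      exact hv _ ⟨(adjoint S v, 0), by simp⟩
    exact inner_self_eq_zero.1 (hv v ⟨(0, ⟨v, h1⟩), by simp⟩)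
  exact h

lemma norm_add_sq_of_ker {E L : Type*}
    [NormedAddCommGroup E] [InnerProductSpace ℂ E] [CompleteSpace E]
    [NormedAddCommGroup L] [InnerProductSpace ℂ L] [CompleteSpace L] {S : E →L[ℂ] L}
    {v w : L} (hv : inner ℂ w v = 0) (hw : adjoint S w = 0) (x : E) :
    ‖S x - v + w‖ ^ 2 = ‖S x - v‖ ^ 2 + ‖w‖ ^ 2 := by
  have h : inner ℂ (S x - v) w = 0 := by
    rw [inner_sub_left, ← adjoint_inner_right, hw, ← inner_conj_symm v, hv]
    simp
  simpa only [sq] using norm_add_sq_eq_norm_sq_add_norm_sq_of_inner_eq_zero _ _ h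

/-- Douglas' factorization lemma. The factor `Γ` is normalized to vanish on the orthogonal
complement of the range of `S`, written here as the kernel of `S†`. -/
lemma exists_douglas_factor {E K L : Type*}
    [NormedAddCommGroup E] [InnerProductSpace ℂ E] [CompleteSpace E]
    [NormedAddCommGroup K] [InnerProductSpace ℂ K] [CompleteSpace K]
    [NormedAddCommGroup L] [InnerProductSpace ℂ L] [CompleteSpace L]
    (T : E →L[ℂ] K) (S : E →L[ℂ] L) (h : ∀ x, ‖T x‖ ^ 2 ≤ ‖S x‖ ^ 2) :
    ∃ Γ : L →L[ℂ] K, ‖Γ‖ ≤ 1 ∧ (∀ x, T x = Γ (S x)) ∧ ∀ w, adjoint S w = 0 → Γ w = 0 := by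
  -- `Γ` extends `S x + w ↦ T x`, for `w` in the kernel of `S†`, by density.
  let e := S.toLinearMap.coprod (adjoint S).ker.subtype
  let f : E × (adjoint S).ker →ₗ[ℂ] K := T.toLinearMap ∘ₗ LinearMap.fst ℂ _ _
  have he : DenseRange e := denseRange_coprod_ker S
  have hfe : ∀ p, ‖f p‖ ≤ 1 * ‖e p‖ := fun ⟨x, w⟩ => by
    have h1 := norm_add_sq_of_ker (S := S) (v := 0) (inner_zero_right (w : L)) w.2 x
    rw [sub_zero] at h1
    have h2 : ‖T x‖ ^ 2 ≤ ‖S x + w‖ ^ 2 := by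
      rw [h1]
      nlinarith [h x, sq_nonneg ‖(w : L)‖]
    simpa [e, f] using le_of_sq_le_sq h2 (norm_nonneg _)
  refine ⟨f.extendOfNorm e, LinearMap.opNorm_extendOfNorm_le he zero_le_one hfe,
    fun x => ?_, fun w hw => ?_⟩
  · have := LinearMap.extendOfNorm_eq he ⟨1, hfe⟩ (x, 0)
    simpa [e, f] using this.symm
  · have := LinearMap.extendOfNorm_eq he ⟨1, hfe⟩ (0, ⟨w, hw⟩)
    simpa [e, f] using this

/-- If `Γ` vanishes on the orthogonal complement of the range of `S`, an estimate that is known on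
the translate `ran S - v`, with `v` in the closure of `ran S`, holds on the whole space. -/
lemma bound_of_bound_on_range {E K L : Type*}
    [NormedAddCommGroup E] [InnerProductSpace ℂ E] [CompleteSpace E]
    [NormedAddCommGroup K] [InnerProductSpace ℂ K] [CompleteSpace K]
    [NormedAddCommGroup L] [InnerProductSpace ℂ L] [CompleteSpace L]
    {Γ : L →L[ℂ] K} {S : E →L[ℂ] L} (hΓ : ∀ w, adjoint S w = 0 → Γ w = 0)
    {v : L} (hv : ∀ w, adjoint S w = 0 → inner ℂ w v = 0) {y : K} {c : ℝ}
    (h : ∀ x, ‖Γ (S x - v) + y‖ ^ 2 ≤ ‖S x - v‖ ^ 2 + c) (u : L) :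
    ‖Γ u + y‖ ^ 2 ≤ ‖u‖ ^ 2 + c := by
  have key : ∀ z, ‖Γ (z - v) + y‖ ^ 2 ≤ ‖z - v‖ ^ 2 + c := by
    intro z
    refine (denseRange_coprod_ker S).induction
      (P := fun z => ‖Γ (z - v) + y‖ ^ 2 ≤ ‖z - v‖ ^ 2 + c) ?_
      (isClosed_le (by fun_prop) (by fun_prop)) z
    rintro _ ⟨⟨x, w, hw⟩, rfl⟩
    have hw' : adjoint S w = 0 := hw
    have e : S x + w - v = S x - v + w := by abel
    simp only [LinearMap.coprod_apply, coe_coe, Submodule.subtype_apply]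
    rw [e, norm_add_sq_of_ker (hv w hw') hw' x, map_add, hΓ w hw', add_zero]
    nlinarith [h x, sq_nonneg ‖w‖]
  simpa using key (u + v)

/-- The adjoint of a row contraction `[R Z]` is a column contraction. -/
lemma adjoint_row_bound {E F K : Type*}
    [NormedAddCommGroup E] [InnerProductSpace ℂ E] [CompleteSpace E]
    [NormedAddCommGroup F] [InnerProductSpace ℂ F] [CompleteSpace F]
    [NormedAddCommGroup K] [InnerProductSpace ℂ K] [CompleteSpace K]
    {R : E →L[ℂ] K} {Z : F →L[ℂ] K}
    (h : ∀ u w, ‖R u + Z w‖ ^ 2 ≤ ‖u‖ ^ 2 + ‖w‖ ^ 2) (k : K) :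
    ‖adjoint R k‖ ^ 2 + ‖adjoint Z k‖ ^ 2 ≤ ‖k‖ ^ 2 := by
  set s := ‖adjoint R k‖ ^ 2 + ‖adjoint Z k‖ ^ 2 with hs
  set y := R (adjoint R k) + Z (adjoint Z k) with hy
  have h1 : ‖y‖ ^ 2 ≤ s := h _ _
  have h2 : RCLike.re (inner ℂ k y) = s := by
    rw [hy, inner_add_right, ← adjoint_inner_left R, ← adjoint_inner_left Z, map_add,
      inner_self_eq_norm_sq, inner_self_eq_norm_sq]
  have h3 : s ≤ ‖k‖ * ‖y‖ := h2 ▸ re_inner_le_norm k y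
  nlinarith [sq_nonneg (‖k‖ - ‖y‖)]

/-- `[R S]` is a row contraction when `‖R† k‖² + ‖S k‖² = ‖k‖²`, that is `R R† + S² = 1`. -/
lemma row_bound_of_coisometry {E K : Type*}
    [NormedAddCommGroup E] [InnerProductSpace ℂ E] [CompleteSpace E]
    [NormedAddCommGroup K] [InnerProductSpace ℂ K] [CompleteSpace K]
    {R : E →L[ℂ] K} {S : K →L[ℂ] K} (hS : S.IsPositive)
    (h : ∀ k, ‖S k‖ ^ 2 = ‖k‖ ^ 2 - ‖adjoint R k‖ ^ 2) (u : E) (w : K) :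
    ‖R u + S w‖ ^ 2 ≤ ‖u‖ ^ 2 + ‖w‖ ^ 2 := by
  set k := R u + S w with hk
  have h1 : RCLike.re (inner ℂ (adjoint R k) u) + RCLike.re (inner ℂ (S k) w) = ‖k‖ ^ 2 := by
    rw [adjoint_inner_left, hS.inner_left_eq_inner_right, ← map_add, ← inner_add_right, ← hk,
      inner_self_eq_norm_sq]
  have h2 := re_inner_le_norm (𝕜 := ℂ) (adjoint R k) u
  have h3 := re_inner_le_norm (𝕜 := ℂ) (S k) w
  nlinarith [h k, sq_nonneg (‖adjoint R k‖ - ‖u‖), sq_nonneg (‖S k‖ - ‖w‖)]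

/-- The row `[A D_{A†}]` is a coisometry; its defect at `(x, g)` is computed by
`D_A x - A† g`. The cross terms agree by the intertwining relation. -/
lemma row_defect_identity {E F : Type*}
    [NormedAddCommGroup E] [InnerProductSpace ℂ E] [CompleteSpace E]
    [NormedAddCommGroup F] [InnerProductSpace ℂ F] [CompleteSpace F]
    {A : E →L[ℂ] F} {S : E →L[ℂ] E} {P : F →L[ℂ] F}
    (hS : S.IsPositive) (hSS : S ∘L S = 1 - adjoint A ∘L A)
    (hP : P.IsPositive) (hPP : P ∘L P = 1 - A ∘L adjoint A) (x : E) (g : F) :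
    ‖x‖ ^ 2 + ‖g‖ ^ 2 - ‖A x + P g‖ ^ 2 = ‖S x - adjoint A g‖ ^ 2 := by
  have h1 := norm_defect_sq hS hSS x
  have h2 := norm_defect_sq (T := adjoint A) hP (by rw [adjoint_adjoint, hPP]) g
  have h3 : inner ℂ (A x) (P g) = inner ℂ (S x) (adjoint A g) := by
    rw [← hP.inner_left_eq_inner_right, ← defect_intertwine hS hSS hP hPP, adjoint_inner_right]
  rw [norm_add_sq (𝕜 := ℂ), norm_sub_sq (𝕜 := ℂ), h3]
  linarith

theorem two_by_two_block_contraction_iff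
    {H₁ H₂ K₁ K₂ : Type*}
    [NormedAddCommGroup H₁] [InnerProductSpace ℂ H₁] [CompleteSpace H₁]
    [NormedAddCommGroup H₂] [InnerProductSpace ℂ H₂] [CompleteSpace H₂]
    [NormedAddCommGroup K₁] [InnerProductSpace ℂ K₁] [CompleteSpace K₁]
    [NormedAddCommGroup K₂] [InnerProductSpace ℂ K₂] [CompleteSpace K₂]
    (A : H₁ →L[ℂ] K₁) (B : H₂ →L[ℂ] K₁) (C : H₁ →L[ℂ] K₂) (D : H₂ →L[ℂ] K₂) :
    (∀ (h₁ : H₁) (h₂ : H₂),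
        ‖A h₁ + B h₂‖ ^ 2 + ‖C h₁ + D h₂‖ ^ 2 ≤ ‖h₁‖ ^ 2 + ‖h₂‖ ^ 2) ↔
      (‖A‖ ≤ 1 ∧
        ∃ (Γ₂ : H₂ →L[ℂ] K₁) (Γ₃ : H₁ →L[ℂ] K₂) (Γ₄ : H₂ →L[ℂ] K₂)
          (DA : H₁ →L[ℂ] H₁) (DAs : K₁ →L[ℂ] K₁)
          (DΓ₂ : H₂ →L[ℂ] H₂) (DΓ₃s : K₂ →L[ℂ] K₂),
          ‖Γ₂‖ ≤ 1 ∧ ‖Γ₃‖ ≤ 1 ∧ ‖Γ₄‖ ≤ 1 ∧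
          DA.IsPositive ∧ DA ∘L DA = 1 - ContinuousLinearMap.adjoint A ∘L A ∧
          DAs.IsPositive ∧ DAs ∘L DAs = 1 - A ∘L ContinuousLinearMap.adjoint A ∧
          DΓ₂.IsPositive ∧ DΓ₂ ∘L DΓ₂ = 1 - ContinuousLinearMap.adjoint Γ₂ ∘L Γ₂ ∧
          DΓ₃s.IsPositive ∧ DΓ₃s ∘L DΓ₃s = 1 - Γ₃ ∘L ContinuousLinearMap.adjoint Γ₃ ∧
          B = DAs ∘L Γ₂ ∧ C = Γ₃ ∘L DA ∧
          D = -(Γ₃ ∘L ContinuousLinearMap.adjoint A ∘L Γ₂) + DΓ₃s ∘L Γ₄ ∘L DΓ₂) := by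
  constructor
  · intro hM
    have hA : ‖A‖ ≤ 1 := by
      refine A.opNorm_le_bound zero_le_one fun x => ?_
      have h := hM x 0
      simp only [map_zero, add_zero, norm_zero] at h
      rw [one_mul]
      exact le_of_sq_le_sq (by nlinarith [sq_nonneg ‖C x‖]) (norm_nonneg _)
    have hA' : ‖adjoint A‖ ≤ 1 := by rwa [LinearIsometryEquiv.norm_map]
    obtain ⟨S, hS, hSS⟩ := exists_defect_s8 A hA
    obtain ⟨P, hP, hPP⟩ := exists_defect_s8 (adjoint A) hA'
    have aS : adjoint S = S := hS.isSelfAdjoint.adjoint_eq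
    have aP : adjoint P = P := hP.isSelfAdjoint.adjoint_eq
    have nP := norm_defect_sq hP hPP
    rw [adjoint_adjoint] at hPP
    -- The first column gives `C = Γ₃ D_A`.
    obtain ⟨Γ₃, hΓ₃, hC, hΓ₃0⟩ := exists_douglas_factor C S fun x => by
      have h := hM x 0
      simp only [map_zero, add_zero, norm_zero] at h
      rw [norm_defect_sq hS hSS]
      linarith
    -- The adjoint of the first row gives `B† = Γ₂† D_{A†}`.
    obtain ⟨G, hG, hB, hG0⟩ := exists_douglas_factor (adjoint B) P fun k => by
      have h := adjoint_row_bound (R := A) (Z := B)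
        (fun u w => by nlinarith [hM u w, sq_nonneg ‖C u + D w‖]) k
      rw [nP]
      linarith
    obtain ⟨Γ₂, rfl⟩ : ∃ Γ₂, G = adjoint Γ₂ := ⟨adjoint G, (adjoint_adjoint G).symm⟩
    have hΓ₂ : ‖Γ₂‖ ≤ 1 := by rwa [LinearIsometryEquiv.norm_map] at hG
    have hB' : B = P ∘L Γ₂ := by
      have h : adjoint B = adjoint (P ∘L Γ₂) := by
        rw [adjoint_comp, aP]
        exact ContinuousLinearMap.ext hB
      exact adjoint.injective h
    obtain ⟨S₂, hS₂, hSS₂⟩ := exists_defect_s8 Γ₂ hΓ₂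
    obtain ⟨S₃, hS₃, hSS₃⟩ := exists_defect_s8 (adjoint Γ₃) (by rwa [LinearIsometryEquiv.norm_map])
    have aS₃ : adjoint S₃ = S₃ := hS₃.isSelfAdjoint.adjoint_eq
    have nS₂ := norm_defect_sq hS₂ hSS₂
    have nS₃ := norm_defect_sq hS₃ hSS₃
    rw [adjoint_adjoint] at hSS₃
    -- `A† Γ₂` has range in the closure of the range of `D_A`, because `Γ₂` has range in the
    -- closure of the range of `D_{A†}`, and `D_{A†} A = A D_A`.
    have hv : ∀ h w, adjoint S w = 0 → inner ℂ w (adjoint A (Γ₂ h)) = 0 := fun h w hw => by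
      rw [aS] at hw
      have h1 : adjoint P (A w) = 0 := by
        rw [aP, ← defect_intertwine hS hSS hP hPP, hw, map_zero]
      rw [adjoint_inner_right, ← adjoint_inner_left, hG0 _ h1, inner_zero_left]
    obtain ⟨T, hT⟩ : ∃ T, T = D + Γ₃ ∘L adjoint A ∘L Γ₂ := ⟨_, rfl⟩
    -- `[Γ₃ T]` is dominated by `diag(1, D_{Γ₂})`.
    have key : ∀ u h, ‖Γ₃ u + T h‖ ^ 2 ≤ ‖u‖ ^ 2 + ‖S₂ h‖ ^ 2 := fun u h => by
      refine bound_of_bound_on_range hΓ₃0 (hv h) (fun x => ?_) u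
      have h1 := hM x h
      have h2 := row_defect_identity hS hSS hP hPP x (Γ₂ h)
      have h3 : Γ₃ (S x - adjoint A (Γ₂ h)) + T h = C x + D h := by
        simp only [hT, map_sub, hC, add_apply, comp_apply]
        abel
      have h4 : B h = P (Γ₂ h) := congr($hB' h)
      rw [h3, nS₂]
      rw [h4] at h1
      linarith
    obtain ⟨Z, -, hZ, hZ0⟩ := exists_douglas_factor T S₂ fun h => by
      simpa using key 0 h
    have hrow : ∀ u w, ‖Γ₃ u + Z w‖ ^ 2 ≤ ‖u‖ ^ 2 + ‖w‖ ^ 2 := fun u w => by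
      rw [add_comm (Γ₃ u), add_comm (‖u‖ ^ 2)]
      refine bound_of_bound_on_range (v := 0) hZ0 (fun w _ => inner_zero_right w) (fun x => ?_) w
      rw [sub_zero, ← hZ, add_comm (T x), add_comm (‖S₂ x‖ ^ 2)]
      exact key u x
    obtain ⟨G₄, hG₄, hZ', -⟩ := exists_douglas_factor (adjoint Z) S₃ fun k => by
      rw [nS₃]
      linarith [adjoint_row_bound hrow k]
    have hZ'' : Z = S₃ ∘L adjoint G₄ := by
      have h : adjoint Z = adjoint (S₃ ∘L adjoint G₄) := by
        rw [adjoint_comp, aS₃, adjoint_adjoint]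
        exact ContinuousLinearMap.ext hZ'
      exact adjoint.injective h
    refine ⟨hA, Γ₂, Γ₃, adjoint G₄, S, P, S₂, S₃, hΓ₂, hΓ₃,
      by rwa [LinearIsometryEquiv.norm_map], hS, hSS, hP, hPP, hS₂, hSS₂, hS₃, hSS₃, hB',
      ContinuousLinearMap.ext hC, ?_⟩
    ext h
    have h1 := hZ h
    rw [hT, hZ''] at h1
    simp only [add_apply, comp_apply, neg_apply] at h1 ⊢
    rw [← h1]
    abel
  · rintro ⟨-, Γ₂, Γ₃, Γ₄, S, P, S₂, S₃, -, -, hΓ₄, hS, hSS, hP, hPP, hS₂, hSS₂, hS₃, hSS₃,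
      rfl, rfl, rfl⟩ h₁ h₂
    have h1 := row_defect_identity hS hSS hP hPP h₁ (Γ₂ h₂)
    have h2 := norm_defect_sq hS₂ hSS₂ h₂
    have h3 := row_bound_of_coisometry (R := Γ₃) hS₃
      (norm_defect_sq (T := adjoint Γ₃) hS₃ (by rw [adjoint_adjoint, hSS₃]))
      (S h₁ - adjoint A (Γ₂ h₂)) (Γ₄ (S₂ h₂))
    have h4 : ‖Γ₄ (S₂ h₂)‖ ≤ ‖S₂ h₂‖ := by simpa using Γ₄.le_of_opNorm_le hΓ₄ (S₂ h₂)
    have h5 : ‖Γ₄ (S₂ h₂)‖ ^ 2 ≤ ‖S₂ h₂‖ ^ 2 := by gcongr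
    have h6 : (Γ₃ ∘L S) h₁ + (-(Γ₃ ∘L adjoint A ∘L Γ₂) + S₃ ∘L Γ₄ ∘L S₂) h₂
        = Γ₃ (S h₁ - adjoint A (Γ₂ h₂)) + S₃ (Γ₄ (S₂ h₂)) := by
      simp only [add_apply, comp_apply, neg_apply, map_sub]
      abel
    rw [h6, comp_apply]
    linarith
end

section
/- Let H, H₁, H₂ be complex Hilbert spaces and Γ₁ : H₁ →L[ℂ] H, Γ₂ : H₂ →L[ℂ] H contractions, and let T = [Γ₁, D_{Γ₁†} ∘ Γ₂] be the associated row contraction. Then its defect 1 − T†∘T is given by the factorization: for all h₁ ∈ H₁, h₂ ∈ H₂, ‖h₁‖² + ‖h₂‖² − ‖Γ₁ h₁ + D_{Γ₁†} (Γ₂ h₂)‖² = ‖D_{Γ₁} h₁ − Γ₁† (Γ₂ h₂)‖² + ‖D_{Γ₂} h₂‖². -/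
open ContinuousLinearMap

/-!
Expanding both squared norms and using `‖D_Γ x‖² = ‖x‖² - ‖Γ x‖²` for the three defect operators
leaves only the cross terms to compare: `Re ⟪Γ₁ h₁, D_{Γ₁†} w⟫` and `Re ⟪D_{Γ₁} h₁, Γ₁† w⟫`, where
`w = Γ₂ h₂`. They agree because of the intertwining relation `Γ₁ D_{Γ₁} = D_{Γ₁†} Γ₁`.

That relation is the square-root version of the evident `Γ₁ (1 - Γ₁†Γ₁) = (1 - Γ₁Γ₁†) Γ₁`.
The general fact, `intertwine_of_intertwine_sq`, says that for positive `A`, `B`, the equation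
`X A² = B² X` forces `X A = B X`. The difference `Y = X A - B X` satisfies
`Y A = -B Y`; positivity of `A` and `B` makes both sides vanish, whence `Y Y†Y = 0` and `Y = 0`.
-/

section Intertwining

variable {E F : Type*}
  [NormedAddCommGroup E] [InnerProductSpace ℂ E] [CompleteSpace E]
  [NormedAddCommGroup F] [InnerProductSpace ℂ F] [CompleteSpace F]

/-- `Y†Y Z = 0` implies `Y Z = 0`, since `ker Y†Y = ker Y`. -/
lemma comp_eq_zero_of_adjoint_comp_comp_eq_zero {G : Type*}
    [NormedAddCommGroup G] [InnerProductSpace ℂ G]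
    (Y : E →L[ℂ] F) (Z : G →L[ℂ] E) (h : adjoint Y ∘L (Y ∘L Z) = 0) : Y ∘L Z = 0 := by
  ext x
  have hx : adjoint Y (Y (Z x)) = 0 := congr($h x)
  have : inner ℂ (Y (Z x)) (Y (Z x)) = 0 := by
    rw [← adjoint_inner_left, hx, inner_zero_left]
  simpa using this

/-- If `A`, `B` are positive and `Y A = -B Y`, then `Y A = 0`: the operator `Y†Y A = -Y†B Y` is
self-adjoint, so `Y†Y` and `A` commute and their product is positive, while `-Y†B Y` is
negative. -/
lemma comp_eq_zero_of_anti_intertwine {A : E →L[ℂ] E} {B : F →L[ℂ] F} (Y : E →L[ℂ] F)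
    (hA : A.IsPositive) (hB : B.IsPositive) (h : Y ∘L A = -(B ∘L Y)) : Y ∘L A = 0 := by
  have hAa : adjoint A = A := hA.isSelfAdjoint.adjoint_eq
  have hBa : adjoint B = B := hB.isSelfAdjoint.adjoint_eq
  have hneg : (adjoint Y ∘L Y) ∘L A = -(adjoint Y ∘L B ∘L Y) := by
    rw [comp_assoc, h, comp_neg]
  have hcomm : Commute (adjoint Y ∘L Y) A := by
    have h2 := congr(adjoint $hneg)
    simp only [map_neg, adjoint_comp, adjoint_adjoint, hAa, hBa] at h2
    change (adjoint Y ∘L Y) ∘L A = A ∘L (adjoint Y ∘L Y)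
    rw [hneg, h2, comp_assoc]
  have hpos : 0 ≤ (adjoint Y ∘L Y) ∘L A :=
    hcomm.mul_nonneg ((nonneg_iff_isPositive _).2 (isPositive_adjoint_comp_self Y))
      ((nonneg_iff_isPositive _).2 hA)
  have hpos' : 0 ≤ adjoint Y ∘L B ∘L Y := (nonneg_iff_isPositive _).2 (hB.adjoint_conj Y)
  have hzero : (adjoint Y ∘L Y) ∘L A = 0 :=
    le_antisymm (by rw [hneg]; exact neg_nonpos.2 hpos') hpos
  exact comp_eq_zero_of_adjoint_comp_comp_eq_zero Y A (by rwa [comp_assoc] at hzero)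

/-- An operator intertwining the squares of two positive operators intertwines the operators
themselves. -/
lemma intertwine_of_intertwine_sq {A : E →L[ℂ] E} {B : F →L[ℂ] F} (X : E →L[ℂ] F)
    (hA : A.IsPositive) (hB : B.IsPositive) (h : X ∘L (A ∘L A) = (B ∘L B) ∘L X) :
    X ∘L A = B ∘L X := by
  have hAa : adjoint A = A := hA.isSelfAdjoint.adjoint_eq
  have hBa : adjoint B = B := hB.isSelfAdjoint.adjoint_eq
  set Y := X ∘L A - B ∘L X with hY
  have hanti : Y ∘L A = -(B ∘L Y) := by
    simp only [hY, sub_comp, comp_sub, comp_assoc, h]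
    abel
  have hYA : Y ∘L A = 0 := comp_eq_zero_of_anti_intertwine Y hA hB hanti
  have hBY : B ∘L Y = 0 := by rwa [hYA, eq_comm, neg_eq_zero] at hanti
  have hYB : adjoint Y ∘L B = 0 := by
    have := congr(adjoint $hBY)
    rwa [adjoint_comp, hBa, map_zero] at this
  -- As `Y†B = 0`, the definition of `Y` gives `Y†Y = Y†X A`; its adjoint is `A X†Y`.
  have hYY : adjoint Y ∘L Y = A ∘L (adjoint X ∘L Y) := by
    have h1 : adjoint Y ∘L Y = adjoint Y ∘L (X ∘L A) := by
      conv_lhs => rw [hY, comp_sub, ← hY, ← comp_assoc _ B X, hYB, zero_comp, sub_zero]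
    have h2 := congr(adjoint $h1)
    simpa only [adjoint_comp, adjoint_adjoint, hAa, comp_assoc] using h2
  have hYYY : Y ∘L (adjoint Y ∘L Y) = 0 := by
    rw [hYY, ← comp_assoc, hYA, zero_comp]
  have hP : adjoint Y ∘L Y = 0 := by
    have h1 : adjoint (adjoint Y ∘L Y) ∘L (adjoint Y ∘L Y) = 0 := by
      rw [adjoint_comp, adjoint_adjoint, comp_assoc, hYYY, comp_zero]
    exact adjoint_comp_self_eq_zero_iff.1 h1
  exact sub_eq_zero.1 (adjoint_comp_self_eq_zero_iff.1 hP)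

lemma norm_sq_defect_apply {D : E →L[ℂ] E} (Γ : E →L[ℂ] F) (hD : D.IsPositive)
    (h : D ∘L D = 1 - adjoint Γ ∘L Γ) (x : E) : ‖D x‖ ^ 2 = ‖x‖ ^ 2 - ‖Γ x‖ ^ 2 := by
  have hx : D (D x) = x - adjoint Γ (Γ x) := congr($h x)
  have h1 : inner ℂ (D x) (D x) = inner ℂ x x - inner ℂ (Γ x) (Γ x) := by
    rw [← adjoint_inner_left D, hD.isSelfAdjoint.adjoint_eq, hx, inner_sub_left,
      adjoint_inner_left]
  simp only [inner_self_eq_norm_sq_to_K] at h1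
  exact_mod_cast h1

end Intertwining

theorem row_contraction_defect_identity
    {H H₁ H₂ : Type*}
    [NormedAddCommGroup H] [InnerProductSpace ℂ H] [CompleteSpace H]
    [NormedAddCommGroup H₁] [InnerProductSpace ℂ H₁] [CompleteSpace H₁]
    [NormedAddCommGroup H₂] [InnerProductSpace ℂ H₂] [CompleteSpace H₂]
    (Γ₁ : H₁ →L[ℂ] H) (hΓ₁ : ‖Γ₁‖ ≤ 1)
    (Γ₂ : H₂ →L[ℂ] H) (hΓ₂ : ‖Γ₂‖ ≤ 1)
    (DΓ₁ : H₁ →L[ℂ] H₁) (hDΓ₁pos : DΓ₁.IsPositive)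
    (hDΓ₁sq : DΓ₁ ∘L DΓ₁ = 1 - ContinuousLinearMap.adjoint Γ₁ ∘L Γ₁)
    (DΓ₁s : H →L[ℂ] H) (hDΓ₁spos : DΓ₁s.IsPositive)
    (hDΓ₁ssq : DΓ₁s ∘L DΓ₁s = 1 - Γ₁ ∘L ContinuousLinearMap.adjoint Γ₁)
    (DΓ₂ : H₂ →L[ℂ] H₂) (hDΓ₂pos : DΓ₂.IsPositive)
    (hDΓ₂sq : DΓ₂ ∘L DΓ₂ = 1 - ContinuousLinearMap.adjoint Γ₂ ∘L Γ₂) :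
    ∀ (h₁ : H₁) (h₂ : H₂),
      ‖h₁‖ ^ 2 + ‖h₂‖ ^ 2 - ‖Γ₁ h₁ + DΓ₁s (Γ₂ h₂)‖ ^ 2 =
        ‖DΓ₁ h₁ - (ContinuousLinearMap.adjoint Γ₁) (Γ₂ h₂)‖ ^ 2 + ‖DΓ₂ h₂‖ ^ 2 := by
  intro h₁ h₂
  have hint : Γ₁ ∘L DΓ₁ = DΓ₁s ∘L Γ₁ := by
    apply intertwine_of_intertwine_sq Γ₁ hDΓ₁pos hDΓ₁spos
    rw [hDΓ₁sq, hDΓ₁ssq]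
    ext x
    simp
  have hcross : inner ℂ (Γ₁ h₁) (DΓ₁s (Γ₂ h₂)) = inner ℂ (DΓ₁ h₁) (adjoint Γ₁ (Γ₂ h₂)) := by
    have hx : Γ₁ (DΓ₁ h₁) = DΓ₁s (Γ₁ h₁) := congr($hint h₁)
    rw [adjoint_inner_right, hx, ← adjoint_inner_left DΓ₁s, hDΓ₁spos.isSelfAdjoint.adjoint_eq]
  have e₁ := norm_sq_defect_apply Γ₁ hDΓ₁pos hDΓ₁sq h₁
  have e₂ := norm_sq_defect_apply Γ₂ hDΓ₂pos hDΓ₂sq h₂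
  have e₃ := norm_sq_defect_apply (adjoint Γ₁) hDΓ₁spos
    (by rw [adjoint_adjoint]; exact hDΓ₁ssq) (Γ₂ h₂)
  rw [norm_add_sq (𝕜 := ℂ), norm_sub_sq (𝕜 := ℂ), hcross]
  linarith
end

section
/- Let H₁, H₂, K₁, K₂ be complex Hilbert spaces, L₁ : H₁ →L[ℂ] K₁, L₂ : H₂ →L[ℂ] K₂ bounded operators, and A₁₂ : H₂ →L[ℂ] H₁ a bounded operator such that the block operator [[L₁†∘L₁, A₁₂],[A₁₂†, L₂†∘L₂]] is positive, i.e. ‖L₁ h₁‖² + 2 Re⟪h₁, A₁₂ h₂⟫ + ‖L₂ h₂‖² ≥ 0 for all h₁ ∈ H₁, h₂ ∈ H₂. Then there exists a contraction Γ : K₂ →L[ℂ] K₁ with A₁₂ = L₁† ∘ Γ ∘ L₂. -/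
/-!
Scaling `h₁` by complex numbers turns positivity of the block operator into the Cauchy–Schwarz
type inequality `|⟪h₁, A₁₂ h₂⟫| ≤ ‖L₁ h₁‖ ‖L₂ h₂‖` (`norm_inner_le_of_block_nonneg`). The
factorization then follows from two applications of the Douglas lemma (`exists_douglas_factor`):
a bound `‖f x‖ ≤ C ‖e x‖` lets one factor `f = Γ e` with `‖Γ‖ ≤ C` and `Γ` vanishing on the
orthogonal complement of the range of `e`. Since `‖A₁₂† h₁‖ ≤ ‖L₂‖ ‖L₁ h₁‖`, one gets
`A₁₂† = R L₁`, i.e. `A₁₂ = L₁† R†`. As `R` only sees the closure of the range of `L₁`, the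
inequality extends to `|⟪R k, h₂⟫| ≤ ‖k‖ ‖L₂ h₂‖` for all `k`, that is `‖R† h₂‖ ≤ ‖L₂ h₂‖`,
and hence `R† = Γ L₂` with `Γ` a contraction.
-/

open ContinuousLinearMap
open scoped InnerProductSpace

/-- Douglas factorization. The last clause records that `Γ` factors through the orthogonal
projection onto the closure of the range of `e`. -/
theorem exists_douglas_factor_s11 {E F G : Type*}
    [NormedAddCommGroup E] [InnerProductSpace ℂ E]
    [NormedAddCommGroup F] [InnerProductSpace ℂ F] [CompleteSpace F]
    [NormedAddCommGroup G] [InnerProductSpace ℂ G] [CompleteSpace G]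
    (f : E →L[ℂ] F) (e : E →L[ℂ] G) (C : ℝ) (hC : 0 ≤ C) (h : ∀ x, ‖f x‖ ≤ C * ‖e x‖) :
    ∃ Γ : G →L[ℂ] F, ‖Γ‖ ≤ C ∧ (∀ x, Γ (e x) = f x) ∧
      ∀ k, ∃ y ∈ closure (Set.range e), ‖y‖ ≤ ‖k‖ ∧ Γ k = Γ y := by
  let M : Submodule ℂ G := (LinearMap.range e.toLinearMap).topologicalClosure
  have hMc : (M : Set G) = closure (Set.range e) := by
    rw [Submodule.topologicalClosure_coe]
    rfl
  have hmem : ∀ x, e x ∈ M := fun x => by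
    rw [← SetLike.mem_coe, hMc]
    exact subset_closure ⟨x, rfl⟩
  have : CompleteSpace M :=
    (Submodule.isClosed_topologicalClosure _).completeSpace_coe
  let e' : E →ₗ[ℂ] M := e.toLinearMap.codRestrict M hmem
  have hdense : DenseRange e' := by
    intro y
    rw [closure_subtype]
    have hy : (y : G) ∈ closure (Set.range e) := hMc ▸ y.2
    refine closure_mono ?_ hy
    rintro _ ⟨x, rfl⟩
    exact ⟨e' x, ⟨x, rfl⟩, rfl⟩
  have h' : ∀ x, ‖f.toLinearMap x‖ ≤ C * ‖e' x‖ := h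
  let g : M →L[ℂ] F := f.toLinearMap.extendOfNorm e'
  have hP : ∀ y : M, M.orthogonalProjectionOnto (y : G) = y := fun y =>
    Submodule.orthogonalProjectionOnto_mem_subspace_eq_self y
  have hPn : ∀ k, ‖M.orthogonalProjectionOnto k‖ ≤ ‖k‖ := fun k =>
    Submodule.norm_orthogonalProjectionOnto_apply_le M k
  refine ⟨g ∘L M.orthogonalProjectionOnto, ?_, ?_, ?_⟩
  · refine ContinuousLinearMap.opNorm_le_bound _ hC fun k => ?_
    exact (LinearMap.norm_extendOfNorm_apply_le hdense C h' _).trans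
      (mul_le_mul_of_nonneg_left (hPn k) hC)
  · intro x
    have := LinearMap.extendOfNorm_eq hdense ⟨C, h'⟩ x
    rw [ContinuousLinearMap.comp_apply, show e x = ((e' x : M) : G) from rfl, hP]
    exact this
  · intro k
    refine ⟨(M.orthogonalProjectionOnto k : G), hMc ▸ (M.orthogonalProjectionOnto k).2, hPn k, ?_⟩
    rw [ContinuousLinearMap.comp_apply, ContinuousLinearMap.comp_apply, hP]

theorem norm_inner_le_of_block_nonneg {H₁ H₂ K₁ K₂ : Type*}
    [NormedAddCommGroup H₁] [InnerProductSpace ℂ H₁]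
    [NormedAddCommGroup H₂] [InnerProductSpace ℂ H₂]
    [NormedAddCommGroup K₁] [InnerProductSpace ℂ K₁]
    [NormedAddCommGroup K₂] [InnerProductSpace ℂ K₂]
    (L₁ : H₁ →L[ℂ] K₁) (L₂ : H₂ →L[ℂ] K₂) (A₁₂ : H₂ →L[ℂ] H₁)
    (hpos : ∀ (h₁ : H₁) (h₂ : H₂),
      0 ≤ ‖L₁ h₁‖ ^ 2 + 2 * (⟪h₁, A₁₂ h₂⟫_ℂ).re + ‖L₂ h₂‖ ^ 2) (h₁ : H₁) (h₂ : H₂) :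
    ‖⟪h₁, A₁₂ h₂⟫_ℂ‖ ≤ ‖L₁ h₁‖ * ‖L₂ h₂‖ := by
  set w := ⟪h₁, A₁₂ h₂⟫_ℂ with hw
  rcases eq_or_ne w 0 with h0 | h0
  · rw [h0, norm_zero]; positivity
  have hc : 0 < ‖w‖ := norm_pos_iff.2 h0
  -- Replacing `h₁` by `(t w) h₁` aligns the phase: the cross term becomes `2 t ‖w‖²`.
  have key : ∀ t : ℝ, 0 ≤ (‖w‖ ^ 2 * ‖L₁ h₁‖ ^ 2) * (t * t) + (2 * ‖w‖ ^ 2) * t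
      + ‖L₂ h₂‖ ^ 2 := by
    intro t
    have := hpos (((t : ℂ) * w) • h₁) h₂
    rw [map_smul, norm_smul, inner_smul_left, ← hw, map_mul, Complex.conj_ofReal, mul_assoc,
      Complex.conj_mul', norm_mul, Complex.norm_real, Real.norm_eq_abs, mul_pow, mul_pow,
      sq_abs, ← Complex.ofReal_pow, ← Complex.ofReal_mul, Complex.ofReal_re] at this
    linarith
  have hd := discrim_le_zero key
  rw [discrim] at hd
  have h2 : ‖w‖ ^ 2 * ‖w‖ ^ 2 ≤ ‖w‖ ^ 2 * (‖L₁ h₁‖ * ‖L₂ h₂‖) ^ 2 := by linarith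
  exact le_of_sq_le_sq (le_of_mul_le_mul_left h2 (by positivity)) (by positivity)

theorem norm_le_of_norm_inner_self_le {V : Type*} [NormedAddCommGroup V]
    [InnerProductSpace ℂ V] (x : V) (c : ℝ) (hc : 0 ≤ c) (hx : ‖⟪x, x⟫_ℂ‖ ≤ ‖x‖ * c) :
    ‖x‖ ≤ c := by
  rcases eq_or_ne x 0 with rfl | h0
  · simpa using hc
  rw [inner_self_eq_norm_sq_to_K, norm_pow, RCLike.norm_ofReal, abs_norm, sq] at hx
  exact le_of_mul_le_mul_left hx (norm_pos_iff.2 h0)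

theorem positive_block_offdiagonal_factorization
    {H₁ H₂ K₁ K₂ : Type*}
    [NormedAddCommGroup H₁] [InnerProductSpace ℂ H₁] [CompleteSpace H₁]
    [NormedAddCommGroup H₂] [InnerProductSpace ℂ H₂] [CompleteSpace H₂]
    [NormedAddCommGroup K₁] [InnerProductSpace ℂ K₁] [CompleteSpace K₁]
    [NormedAddCommGroup K₂] [InnerProductSpace ℂ K₂] [CompleteSpace K₂]
    (L₁ : H₁ →L[ℂ] K₁) (L₂ : H₂ →L[ℂ] K₂) (A₁₂ : H₂ →L[ℂ] H₁)
    (hpos : ∀ (h₁ : H₁) (h₂ : H₂),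
      0 ≤ ‖L₁ h₁‖ ^ 2 + 2 * (⟪h₁, A₁₂ h₂⟫_ℂ).re + ‖L₂ h₂‖ ^ 2) :
    ∃ Γ : K₂ →L[ℂ] K₁, ‖Γ‖ ≤ 1 ∧
      A₁₂ = ContinuousLinearMap.adjoint L₁ ∘L Γ ∘L L₂ := by
  have hCS := norm_inner_le_of_block_nonneg L₁ L₂ A₁₂ hpos
  obtain ⟨R, -, hR, hRc⟩ := exists_douglas_factor_s11 (adjoint A₁₂) L₁ ‖L₂‖ (norm_nonneg _) (by
    intro x
    refine norm_le_of_norm_inner_self_le _ _ (by positivity) ?_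
    rw [adjoint_inner_left]
    calc _ ≤ _ := hCS _ _
      _ ≤ ‖L₁ x‖ * (‖L₂‖ * ‖adjoint A₁₂ x‖) := by gcongr; exact L₂.le_opNorm _
      _ = _ := by ring)
  have hRk : ∀ k h₂, ‖⟪R k, h₂⟫_ℂ‖ ≤ ‖k‖ * ‖L₂ h₂‖ := by
    intro k h₂
    obtain ⟨y, hy, hyk, hRy⟩ := hRc k
    have hy' : ‖⟪R y, h₂⟫_ℂ‖ ≤ ‖y‖ * ‖L₂ h₂‖ := by
      have hcl : IsClosed {y | ‖⟪R y, h₂⟫_ℂ‖ ≤ ‖y‖ * ‖L₂ h₂‖} :=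
        isClosed_le (by fun_prop) (by fun_prop)
      refine closure_minimal ?_ hcl hy
      rintro _ ⟨x, rfl⟩
      rw [Set.mem_ofPred_eq, hR, adjoint_inner_left]
      exact hCS x h₂
    rw [hRy]
    exact hy'.trans (by gcongr)
  obtain ⟨Γ, hΓ, hΓL, -⟩ := exists_douglas_factor_s11 (adjoint R) L₂ 1 zero_le_one (by
    intro x
    rw [one_mul]
    refine norm_le_of_norm_inner_self_le _ _ (norm_nonneg _) ?_
    rw [adjoint_inner_right]
    exact hRk _ _)
  refine ⟨Γ, hΓ, ?_⟩
  have hRL : R ∘L L₁ = adjoint A₁₂ := ContinuousLinearMap.ext hR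
  have hΓL' : Γ ∘L L₂ = adjoint R := ContinuousLinearMap.ext hΓL
  rw [hΓL', ← adjoint_comp, hRL, adjoint_adjoint]
end

section
/- Let Φ : Matrix (Fin n) (Fin n) ℂ →ₗ[ℂ] Matrix (Fin m) (Fin m) ℂ be a positive linear map, and let T, S : Matrix (Fin n) (Fin n) ℂ be such that the block matrix fromBlocks T S Sᴴ T is positive semidefinite. Then the block matrix fromBlocks (Φ T) (Φ S) (Φ Sᴴ) (Φ T) is positive semidefinite. -/
open Matrix
open scoped ComplexOrder

/-!
Write the positive semidefinite block matrix `[[T, S], [Sᴴ, T]]` as a Gram matrix of vectors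
`a₁, …, aₙ, b₁, …, bₙ`. Equality of the two diagonal blocks says that `a` and `b` have the same
Gram matrix `T`, so some isometry `U` of the finite-dimensional ambient space maps each `aⱼ` to
`bⱼ`, and `S i j = ⟪aᵢ, U aⱼ⟫`. Expanding in an orthonormal eigenbasis of `U`, with eigenvalues
`μₖ` on the unit circle, gives positive semidefinite matrices `Pₖ` with
`T = ∑ Pₖ`, `S = ∑ μₖ Pₖ` and `Sᴴ = ∑ conj μₖ Pₖ`. Hence the block matrix of the images under `Φ`
is the sum over `k` of `[[Q, μ Q], [conj μ Q, Q]] = Xᴴ Q X`, where `Q = Φ Pₖ` is positive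
semidefinite and `X = [1, μ]`.
-/

section Isometry

variable {V : Type*} [NormedAddCommGroup V] [InnerProductSpace ℂ V]

theorem norm_eq_one_of_isometry_eigen (U : V →ₗᵢ[ℂ] V) {μ : ℂ} {v : V} (hv : v ≠ 0)
    (h : U v = μ • v) : ‖μ‖ = 1 := by
  have h1 := U.norm_map v
  rw [h, norm_smul] at h1
  exact mul_right_cancel₀ (norm_ne_zero_iff.mpr hv) (h1.trans (one_mul _).symm)

theorem orthogonalFamily_isometry_eigenspaces (U : V →ₗᵢ[ℂ] V) :
    OrthogonalFamily ℂ (fun μ : ℂ => Module.End.eigenspace U.toLinearMap μ)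
      fun μ => (Module.End.eigenspace U.toLinearMap μ).subtypeₗᵢ := by
  refine OrthogonalFamily.of_pairwise fun μ ν hμν v hv w hw => inner_eq_zero_symm.mp ?_
  rw [Module.End.mem_eigenspace_iff] at hv hw
  simp only [LinearIsometry.coe_toLinearMap] at hv hw
  by_cases hv0 : v = 0
  · simp [hv0]
  have hμ := norm_eq_one_of_isometry_eigen U hv0 hv
  have h1 := U.inner_map_map v w
  rw [hv, hw, inner_smul_left, inner_smul_right] at h1
  have hμ' : μ * (starRingEnd ℂ) μ = 1 := by
    rw [Complex.mul_conj, Complex.normSq_eq_norm_sq, hμ]; simp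
  have h2 : (ν - μ) * inner ℂ v w = 0 := by
    linear_combination μ * h1 - ν * inner ℂ v w * hμ'
  exact (mul_eq_zero.mp h2).resolve_left (sub_ne_zero.mpr hμν.symm)

variable [FiniteDimensional ℂ V]

/-- The orthogonal complement of the span of all eigenvectors is invariant under the isometry, so
it would contain an eigenvector if it were nonzero. -/
theorem orthogonal_iSup_isometry_eigenspaces (U : V →ₗᵢ[ℂ] V) :
    (⨆ μ : ℂ, Module.End.eigenspace U.toLinearMap μ)ᗮ = ⊥ := by
  set W := (⨆ μ : ℂ, Module.End.eigenspace U.toLinearMap μ)ᗮ with hW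
  have hmem : ∀ w, w ∈ W ↔ ∀ μ, ∀ v ∈ Module.End.eigenspace U.toLinearMap μ,
      inner ℂ v w = 0 := by
    intro w
    rw [hW, ← Submodule.iInf_orthogonal, Submodule.mem_iInf]
    rfl
  have hinv : ∀ w ∈ W, U.toLinearMap w ∈ W := by
    intro w hw
    rw [hmem] at hw ⊢
    intro μ v hv
    by_cases hv0 : v = 0
    · simp [hv0]
    have hv' : U v = μ • v := Module.End.mem_eigenspace_iff.mp hv
    have hμ : μ ≠ 0 := by
      have := norm_eq_one_of_isometry_eigen U hv0 hv'
      rintro rfl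
      simp at this
    have h1 := U.inner_map_map v w
    rw [hw μ v hv, hv', inner_smul_left] at h1
    exact (mul_eq_zero.mp h1).resolve_left (by simpa using hμ)
  by_contra hne
  have : Nontrivial W := Submodule.nontrivial_iff_ne_bot.mpr hne
  obtain ⟨μ, hμ⟩ := Module.End.exists_eigenvalue (U.toLinearMap.restrict hinv)
  obtain ⟨w, hw⟩ := hμ.exists_hasEigenvector
  have h1 : U.toLinearMap w = μ • (w : V) := congrArg Subtype.val hw.apply_eq_smul
  have h2 := (hmem w).mp w.2 μ w (Module.End.mem_eigenspace_iff.mpr h1)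
  exact hw.2 (Subtype.ext (inner_self_eq_zero.mp h2))

theorem exists_isometry_eigenbasis (U : V →ₗᵢ[ℂ] V) :
    ∃ (d : ℕ) (e : OrthonormalBasis (Fin d) ℂ V) (μ : Fin d → ℂ),
      ∀ k, U (e k) = μ k • e k ∧ ‖μ k‖ = 1 := by
  classical
  have horth := (orthogonalFamily_isometry_eigenspaces U).comp
    (γ := Module.End.Eigenvalues U.toLinearMap) Subtype.val_injective
  have hint : DirectSum.IsInternal fun μ : Module.End.Eigenvalues U.toLinearMap =>
      Module.End.eigenspace U.toLinearMap (μ : ℂ) := by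
    refine horth.isInternal_iff.mpr ?_
    rw [← orthogonal_iSup_isometry_eigenspaces U]
    congr 1
    exact iSup_ne_bot_subtype fun μ : ℂ => Module.End.eigenspace U.toLinearMap μ
  let e := hint.subordinateOrthonormalBasis rfl horth
  let ν : Fin _ → Module.End.Eigenvalues U.toLinearMap :=
    fun k => hint.subordinateOrthonormalBasisIndex rfl k horth
  have he : ∀ k, U (e k) = (ν k : ℂ) • e k :=
    fun k => Module.End.mem_eigenspace_iff.mp
      (hint.subordinateOrthonormalBasis_subordinate rfl k horth)
  exact ⟨_, e, _, fun k => ⟨he k,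
    norm_eq_one_of_isometry_eigen U (e.orthonormal.ne_zero k) (he k)⟩⟩

/-- Two maps with the same norm at every vector differ by an isometry of the target. -/
theorem exists_isometry_comp {E : Type*} [AddCommGroup E] [Module ℂ E] (A B : E →ₗ[ℂ] V)
    (h : ∀ x, ‖B x‖ = ‖A x‖) : ∃ U : V →ₗᵢ[ℂ] V, ∀ x, U (A x) = B x := by
  obtain ⟨g, hg⟩ := A.rangeRestrict.exists_rightInverse_of_surjective A.range_rangeRestrict
  have hg' : ∀ y, A (g y) = y := fun y => congrArg Subtype.val (LinearMap.congr_fun hg y)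
  let L : LinearMap.range A →ₗᵢ[ℂ] V :=
    ⟨B ∘ₗ g, fun y => by simp [h, hg']⟩
  refine ⟨L.extend, fun x => ?_⟩
  have h1 := L.extend_apply (A.rangeRestrict x)
  have h2 : B (g (A.rangeRestrict x) - x) = 0 := by
    rw [← norm_eq_zero, h, map_sub, hg']
    simp
  rw [map_sub, sub_eq_zero] at h2
  exact h1.trans h2

/-- Two families with the same Gram matrix differ by an isometry. -/
theorem exists_isometry_of_gram_eq {n : ℕ} (a b : Fin n → V)
    (h : ∀ i j, inner ℂ (b i) (b j) = inner ℂ (a i) (a j)) :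
    ∃ U : V →ₗᵢ[ℂ] V, ∀ j, U (a j) = b j := by
  obtain ⟨U, hU⟩ := exists_isometry_comp (Fintype.linearCombination ℂ a)
    (Fintype.linearCombination ℂ b) fun x => by
      have : inner ℂ (Fintype.linearCombination ℂ b x) (Fintype.linearCombination ℂ b x)
          = inner ℂ (Fintype.linearCombination ℂ a x) (Fintype.linearCombination ℂ a x) := by
        simp only [Fintype.linearCombination_apply, sum_inner, inner_sum, inner_smul_left,
          inner_smul_right, h]
      rw [@norm_eq_sqrt_re_inner ℂ, @norm_eq_sqrt_re_inner ℂ, this]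
  refine ⟨U, fun j => ?_⟩
  classical
  simpa using hU (Pi.single j 1)

end Isometry

/-- The decomposition of a positive semidefinite block Toeplitz matrix as a sum of Kronecker
products `[[1, μ], [conj μ, 1]] ⊗ P` with `‖μ‖ = 1` and `P` positive semidefinite. -/
theorem exists_toeplitz_decomposition {n : ℕ} (T S : Matrix (Fin n) (Fin n) ℂ)
    (hTS : (fromBlocks T S Sᴴ T).PosSemidef) :
    ∃ (d : ℕ) (μ : Fin d → ℂ) (P : Fin d → Matrix (Fin n) (Fin n) ℂ),
      (∀ k, ‖μ k‖ = 1) ∧ (∀ k, (P k).PosSemidef) ∧ T = ∑ k, P k ∧ S = ∑ k, μ k • P k := by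
  obtain ⟨R, hR⟩ : ∃ R : Matrix (Fin n ⊕ Fin n) (Fin n ⊕ Fin n) ℂ,
      fromBlocks T S Sᴴ T = Rᴴ * R := by
    open scoped MatrixOrder in
    exact CStarAlgebra.nonneg_iff_eq_star_mul_self.mp hTS.nonneg
  let c : Fin n ⊕ Fin n → EuclideanSpace ℂ (Fin n ⊕ Fin n) := fun i => WithLp.toLp 2 (Rᵀ i)
  have hc : ∀ i j, inner ℂ (c i) (c j) = fromBlocks T S Sᴴ T i j := by
    intro i j
    rw [hR, mul_apply, PiLp.inner_apply]
    simp [c, mul_comm]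
  obtain ⟨U, hU⟩ := exists_isometry_of_gram_eq (fun i => c (.inl i)) (fun i => c (.inr i))
    fun i j => by simp [hc]
  obtain ⟨d, e, μ, he⟩ := exists_isometry_eigenbasis U
  refine ⟨d, μ, fun k => vecMulVec (fun i => inner ℂ (c (.inl i)) (e k))
    (star fun i => inner ℂ (c (.inl i)) (e k)), fun k => (he k).2,
    fun k => posSemidef_vecMulVec_self_star _, ?_, ?_⟩
  · ext i j
    have h := hc (.inl i) (.inl j)
    rw [fromBlocks_apply₁₁, ← e.sum_inner_mul_inner] at h
    rw [← h, Matrix.sum_apply]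
    simp [vecMulVec_apply]
  · ext i j
    have h := hc (.inl i) (.inr j)
    rw [fromBlocks_apply₁₂, ← hU j] at h
    rw [← h, ← e.sum_repr' (c (.inl j)), map_sum, inner_sum, Matrix.sum_apply]
    refine Finset.sum_congr rfl fun k _ => ?_
    rw [map_smul, (he k).1, inner_smul_right, inner_smul_right]
    simp [vecMulVec_apply]
    ring

theorem posSemidef_fromBlocks_unit_smul {m : ℕ} {Q : Matrix (Fin m) (Fin m) ℂ}
    (hQ : Q.PosSemidef) {μ : ℂ} (hμ : ‖μ‖ = 1) :
    (fromBlocks Q (μ • Q) (star μ • Q) Q).PosSemidef := by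
  have h := hQ.conjTranspose_mul_mul_same
    (fromCols (1 : Matrix (Fin m) (Fin m) ℂ) (μ • (1 : Matrix (Fin m) (Fin m) ℂ)))
  have hμ' : μ * (starRingEnd ℂ) μ = 1 := by
    rw [Complex.mul_conj, Complex.normSq_eq_norm_sq, hμ]; simp
  convert h using 1
  rw [conjTranspose_fromCols_eq_fromRows_conjTranspose, fromRows_mul, fromRows_mul_fromCols]
  simp [smul_smul, hμ']

theorem positive_map_two_positive_on_toeplitz
    {n m : ℕ}
    (Φ : Matrix (Fin n) (Fin n) ℂ →ₗ[ℂ] Matrix (Fin m) (Fin m) ℂ)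
    (hΦ : ∀ M : Matrix (Fin n) (Fin n) ℂ, M.PosSemidef → (Φ M).PosSemidef)
    (T S : Matrix (Fin n) (Fin n) ℂ)
    (hTS : (fromBlocks T S Sᴴ T).PosSemidef) :
    (fromBlocks (Φ T) (Φ S) (Φ Sᴴ) (Φ T)).PosSemidef := by
  obtain ⟨d, μ, P, hμ, hP, hT, hS⟩ := exists_toeplitz_decomposition T S hTS
  have hS' : Sᴴ = ∑ k, star (μ k) • P k := by
    rw [hS, conjTranspose_sum]
    exact Finset.sum_congr rfl fun k _ => by rw [conjTranspose_smul, (hP k).isHermitian.eq]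
  have key : fromBlocks (Φ T) (Φ S) (Φ Sᴴ) (Φ T) =
      ∑ k, fromBlocks (Φ (P k)) (μ k • Φ (P k)) (star (μ k) • Φ (P k)) (Φ (P k)) := by
    rw [hS', hT, hS]
    simp only [map_sum, map_smul]
    ext (i | i) (j | j) <;> simp [Matrix.sum_apply]
  rw [key]
  exact posSemidef_sum _ fun k _ => posSemidef_fromBlocks_unit_smul (hΦ _ (hP k)) (hμ k)
end

section
/- Let m ≥ 1, let T, R : Matrix (Fin n) (Fin n) ℂ and S : Fin m → Matrix (Fin n) (Fin n) ℂ, and let A be the (m+1)×(m+1) block 'arrow' matrix with blocks (for i, j : Fin (m+1), writing the last index as ⋆): A i i = T for i ≠ ⋆, A ⋆ ⋆ = R, A i ⋆ = S i and A ⋆ i = S i for i ≠ ⋆, and A i j = 0 for all other i ≠ j. If A (as a matrix on Fin (m+1) × Fin n) is positive semidefinite, then for every positive linear map Φ : Matrix (Fin n) (Fin n) ℂ →ₗ[ℂ] Matrix (Fin p) (Fin p) ℂ, the block matrix with (i,j) block Φ(A i j) is positive semidefinite. -/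
open Matrix
open scoped ComplexOrder

/-!
The diagonal blocks other than the last are equal and the `S i` are Hermitian, and this allows the
argument behind Kadison's inequality `Ψ(X)² ≤ Ψ(X²)` (`X` Hermitian, `Ψ` positive and unital).

Suppose first that `T` is positive definite. The form `x* T x` and a Hermitian form `x* S x` can be
diagonalized simultaneously by a congruence (`exists_simultaneous_decomposition`): there are
positive semidefinite `P k` and real `λ k` with `T = ∑ P k`, `S = ∑ λ k • P k`, and moreover
`S T⁻¹ S = ∑ (λ k)² • P k`. Hence the `2 × 2` block matrix with rows `(T, S)` and `(S, S T⁻¹ S)` is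
`∑ k, (1, λ k; λ k, (λ k)²) ⊗ P k`. Applying `Φ` to the second factors only, each summand stays
positive semidefinite: its form at `(x, y)` is that of `Φ (P k)` at `x + λ k • y`
(`two_by_two_form_nonneg`). The arrow matrix is a sum of `m` such pieces, one for each `i`, and of
the Schur complement `R - ∑ i, S i T⁻¹ S i` in the last corner, which is positive semidefinite
because the arrow matrix is (`arrowForm_map_nonneg_of_posDef`).

A general `T` is replaced by `T + ε • 1`, and `ε` tends to `0`.
-/

/-- The family of blocks of the arrow matrix with diagonal blocks `T, …, T, R` and last row and
column `S`. -/
def arrowBlocks {q m : ℕ} (T R : Matrix (Fin q) (Fin q) ℂ) (S : Fin m → Matrix (Fin q) (Fin q) ℂ) :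
    Fin (m + 1) → Fin (m + 1) → Matrix (Fin q) (Fin q) ℂ :=
  fun i j =>
    if h : i = Fin.last m then
      (if h' : j = Fin.last m then R else S (j.castPred h'))
    else if _ : j = Fin.last m then S (i.castPred h)
    else if i = j then T else 0

/-- The quadratic form of the arrow matrix at the vector with blocks `x 0, …, x (m - 1), y`. -/
def arrowForm {q m : ℕ} (T R : Matrix (Fin q) (Fin q) ℂ) (S : Fin m → Matrix (Fin q) (Fin q) ℂ)
    (x : Fin m → Fin q → ℂ) (y : Fin q → ℂ) : ℂ :=
  ∑ i, (star (x i) ⬝ᵥ T *ᵥ x i + star (x i) ⬝ᵥ S i *ᵥ y + star y ⬝ᵥ S i *ᵥ x i)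
    + star y ⬝ᵥ R *ᵥ y

lemma block_form {q N : ℕ} (A : Fin N → Fin N → Matrix (Fin q) (Fin q) ℂ) (z : Fin N × Fin q → ℂ) :
    star z ⬝ᵥ (Matrix.of fun u v : Fin N × Fin q => A u.1 v.1 u.2 v.2) *ᵥ z =
      ∑ i, ∑ j, star (fun a => z (i, a)) ⬝ᵥ A i j *ᵥ (fun a => z (j, a)) := by
  simp only [dotProduct, mulVec, Fintype.sum_prod_type, Matrix.of_apply, Pi.star_apply,
    Finset.mul_sum]
  refine Finset.sum_congr rfl fun i _ => ?_
  rw [Finset.sum_comm]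

lemma arrowBlocks_form {q m : ℕ} (T R : Matrix (Fin q) (Fin q) ℂ)
    (S : Fin m → Matrix (Fin q) (Fin q) ℂ) (z : Fin (m + 1) × Fin q → ℂ) :
    star z ⬝ᵥ (Matrix.of fun u v : Fin (m + 1) × Fin q =>
        arrowBlocks T R S u.1 v.1 u.2 v.2) *ᵥ z =
      arrowForm T R S (fun i a => z (i.castSucc, a)) (fun a => z (Fin.last m, a)) := by
  have h1 : ∀ i j : Fin m, arrowBlocks T R S i.castSucc j.castSucc = if i = j then T else 0 := by
    intro i j; simp [arrowBlocks, Fin.castSucc_ne_last]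
  have h2 : ∀ i : Fin m, arrowBlocks T R S i.castSucc (Fin.last m) = S i := by
    intro i; simp [arrowBlocks, Fin.castSucc_ne_last]
  have h3 : ∀ i : Fin m, arrowBlocks T R S (Fin.last m) i.castSucc = S i := by
    intro i; simp [arrowBlocks, Fin.castSucc_ne_last]
  have h4 : arrowBlocks T R S (Fin.last m) (Fin.last m) = R := by simp [arrowBlocks]
  have h5 : ∀ (i j : Fin m) (v : Fin q → ℂ),
      (if i = j then T else 0) *ᵥ v = if i = j then T *ᵥ v else 0 := by
    intro i j v; split_ifs <;> simp
  have h6 : ∀ (i j : Fin m) (u v : Fin q → ℂ),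
      u ⬝ᵥ (if i = j then v else 0) = if i = j then u ⬝ᵥ v else 0 := by
    intro i j u v; split_ifs <;> simp
  rw [block_form]
  simp only [Fin.sum_univ_castSucc, h1, h2, h3, h4, h5, h6, arrowForm, Finset.sum_add_distrib,
    Finset.sum_ite_eq, Finset.mem_univ, if_true]
  ring

/-- Simultaneous diagonalization by congruence of a positive definite and a Hermitian form. If
`T = Wᴴ * W` and `S = Wᴴ * D * W` with `D` real diagonal, then `P k` is the `k`-th rank-one
summand of `Wᴴ * W`. -/
lemma exists_simultaneous_decomposition {n : ℕ} {T S : Matrix (Fin n) (Fin n) ℂ}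
    (hT : T.PosDef) (hS : S.IsHermitian) :
    ∃ (P : Fin n → Matrix (Fin n) (Fin n) ℂ) (l : Fin n → ℝ), (∀ k, (P k).PosSemidef) ∧
      T = ∑ k, P k ∧ S = ∑ k, (l k : ℂ) • P k ∧ S * T⁻¹ * S = ∑ k, (l k : ℂ) ^ 2 • P k := by
  obtain ⟨C, hC⟩ : ∃ C : Matrix (Fin n) (Fin n) ℂ, T = Cᴴ * C := by
    open scoped MatrixOrder in
    exact CStarAlgebra.nonneg_iff_eq_star_mul_self.mp hT.posSemidef.nonneg
  have hCu : IsUnit C := by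
    have := hT.isUnit
    rw [hC] at this
    rw [Matrix.isUnit_iff_isUnit_det] at this ⊢
    rw [det_mul] at this
    exact isUnit_of_mul_isUnit_right this
  have hCd := (Matrix.isUnit_iff_isUnit_det C).1 hCu
  have hX : (C⁻¹ᴴ * S * C⁻¹).IsHermitian := isHermitian_conjTranspose_mul_mul _ hS
  set U : Matrix (Fin n) (Fin n) ℂ := hX.eigenvectorUnitary.1
  have hUU : U * Uᴴ = 1 := Unitary.coe_mul_star_self hX.eigenvectorUnitary
  have hUU' : Uᴴ * U = 1 := Unitary.coe_star_mul_self hX.eigenvectorUnitary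
  set D : Matrix (Fin n) (Fin n) ℂ := diagonal fun k => (hX.eigenvalues k : ℂ) with hD
  have hspec : C⁻¹ᴴ * S * C⁻¹ = U * D * Uᴴ := by
    have := hX.spectral_theorem
    rw [Unitary.conjStarAlgAut_apply] at this
    exact this
  have hCC : C⁻¹ * C = 1 := nonsing_inv_mul _ hCd
  have hCC' : Cᴴ * C⁻¹ᴴ = 1 := by rw [← conjTranspose_mul, hCC, conjTranspose_one]
  set W := Uᴴ * C with hW
  have hWd : IsUnit W.det := by
    rw [hW, det_mul]
    refine IsUnit.mul ?_ hCd
    exact IsUnit.of_mul_eq_one U.det (by rw [← det_mul, hUU', det_one])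
  have hWW : W * W⁻¹ = 1 := mul_nonsing_inv _ hWd
  have hWW' : W⁻¹ᴴ * Wᴴ = 1 := by rw [← conjTranspose_mul, hWW, conjTranspose_one]
  have hTW : T = Wᴴ * W := by
    rw [hC, hW, conjTranspose_mul, conjTranspose_conjTranspose,
      show Cᴴ * U * (Uᴴ * C) = Cᴴ * (U * Uᴴ) * C by simp only [mul_assoc], hUU, mul_one]
  have hSW : S = Wᴴ * D * W := by
    calc S = (Cᴴ * C⁻¹ᴴ) * S * (C⁻¹ * C) := by rw [hCC, hCC', one_mul, mul_one]
      _ = Cᴴ * (C⁻¹ᴴ * S * C⁻¹) * C := by simp only [mul_assoc]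
      _ = _ := by
        rw [hspec, hW, conjTranspose_mul, conjTranspose_conjTranspose]; simp only [mul_assoc]
  have hTi : T⁻¹ = W⁻¹ * W⁻¹ᴴ := by
    rw [hTW, Matrix.mul_inv_rev, conjTranspose_nonsing_inv]
  have hSTS : S * T⁻¹ * S = Wᴴ * (D * D) * W := by
    calc S * T⁻¹ * S = Wᴴ * D * (W * W⁻¹) * (W⁻¹ᴴ * Wᴴ) * D * W := by
          rw [hTi, hSW]; simp only [mul_assoc]
      _ = _ := by rw [hWW, hWW']; simp only [mul_assoc, one_mul]
  have key : ∀ c : Fin n → ℂ,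
      Wᴴ * diagonal c * W = ∑ k, c k • (Wᴴ * Matrix.single k k 1 * W) := by
    intro c
    have : diagonal c = ∑ k, c k • Matrix.single k k (1 : ℂ) := by
      rw [← sum_single_eq_diagonal]; simp
    rw [this, Finset.mul_sum, Finset.sum_mul]
    simp only [mul_smul_comm, smul_mul_assoc]
  refine ⟨fun k => Wᴴ * Matrix.single k k 1 * W, hX.eigenvalues, fun k => ?_, ?_, ?_, ?_⟩
  · refine PosSemidef.conjTranspose_mul_mul_same ?_ W
    rw [← diagonal_single]
    refine PosSemidef.diagonal ?_
    exact Pi.single_nonneg.2 zero_le_one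
  · have := key 1
    simpa [hTW] using this
  · exact hSW.trans (key fun k => (hX.eigenvalues k : ℂ))
  · rw [hSTS, ← key (fun k => (hX.eigenvalues k : ℂ) ^ 2), hD, diagonal_mul_diagonal]
    simp only [sq]

/-- The image under `Φ` of the block matrix with rows `(T, S)` and `(S, S T⁻¹ S)` has a nonnegative
quadratic form. -/
lemma two_by_two_form_nonneg {n p : ℕ} {T S : Matrix (Fin n) (Fin n) ℂ}
    (hT : T.PosDef) (hS : S.IsHermitian)
    (Φ : Matrix (Fin n) (Fin n) ℂ →ₗ[ℂ] Matrix (Fin p) (Fin p) ℂ)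
    (hΦ : ∀ M : Matrix (Fin n) (Fin n) ℂ, M.PosSemidef → (Φ M).PosSemidef) (x y : Fin p → ℂ) :
    0 ≤ star x ⬝ᵥ Φ T *ᵥ x + star x ⬝ᵥ Φ S *ᵥ y + star y ⬝ᵥ Φ S *ᵥ x
      + star y ⬝ᵥ Φ (S * T⁻¹ * S) *ᵥ y := by
  obtain ⟨P, l, hP, h1, h2, h3⟩ := exists_simultaneous_decomposition hT hS
  rw [h3, h2, h1]
  simp only [map_sum, map_smul, sum_mulVec, smul_mulVec, dotProduct_sum, dotProduct_smul,
    ← Finset.sum_add_distrib]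
  refine Finset.sum_nonneg fun k _ => ?_
  have := (hΦ _ (hP k)).dotProduct_mulVec_nonneg (x + (l k : ℂ) • y)
  convert this using 1
  simp only [star_add, star_smul, mulVec_add, mulVec_smul, add_dotProduct, dotProduct_add,
    smul_dotProduct, dotProduct_smul, smul_eq_mul, Complex.star_def, Complex.conj_ofReal]
  ring

lemma map_isHermitian {n p : ℕ} {S : Matrix (Fin n) (Fin n) ℂ} (hS : S.IsHermitian)
    (Φ : Matrix (Fin n) (Fin n) ℂ →ₗ[ℂ] Matrix (Fin p) (Fin p) ℂ)
    (hΦ : ∀ M : Matrix (Fin n) (Fin n) ℂ, M.PosSemidef → (Φ M).PosSemidef) :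
    (Φ S).IsHermitian := by
  obtain ⟨P, l, hP, -, h2, -⟩ := exists_simultaneous_decomposition PosDef.one hS
  rw [h2]
  simp only [map_sum, map_smul, IsHermitian, conjTranspose_sum, conjTranspose_smul,
    Complex.star_def, Complex.conj_ofReal, (hΦ _ (hP _)).isHermitian.eq]

lemma arrowForm_map_nonneg_of_posDef {n m p : ℕ} {T R : Matrix (Fin n) (Fin n) ℂ}
    {S : Fin m → Matrix (Fin n) (Fin n) ℂ} (hT : T.PosDef) (hR : R.IsHermitian)
    (hS : ∀ i, (S i).IsHermitian) (h : ∀ x y, 0 ≤ arrowForm T R S x y)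
    (Φ : Matrix (Fin n) (Fin n) ℂ →ₗ[ℂ] Matrix (Fin p) (Fin p) ℂ)
    (hΦ : ∀ M : Matrix (Fin n) (Fin n) ℂ, M.PosSemidef → (Φ M).PosSemidef)
    (x : Fin m → Fin p → ℂ) (y : Fin p → ℂ) :
    0 ≤ arrowForm (Φ T) (Φ R) (fun i => Φ (S i)) x y := by
  have hTd := (Matrix.isUnit_iff_isUnit_det T).1 hT.isUnit
  have hQ : (R - ∑ i, S i * T⁻¹ * S i).PosSemidef := by
    refine PosSemidef.of_dotProduct_mulVec_nonneg ?_ fun v => ?_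
    · refine hR.sub ?_
      simp only [IsHermitian, conjTranspose_sum, conjTranspose_mul, (hS _).eq,
        hT.isHermitian.inv.eq, mul_assoc]
    · -- The vectors `-T⁻¹ S i v` minimize the form for a fixed last block `v`.
      convert h (fun i => -(T⁻¹ *ᵥ (S i *ᵥ v))) v using 1
      have e1 : ∀ i, T *ᵥ (T⁻¹ *ᵥ (S i *ᵥ v)) = S i *ᵥ v := by
        intro i; rw [mulVec_mulVec, mul_nonsing_inv _ hTd, one_mulVec]
      simp only [arrowForm, mulVec_neg, dotProduct_neg, star_neg, neg_dotProduct, neg_neg, e1,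
        add_neg_cancel, zero_add, sub_mulVec, dotProduct_sub, sum_mulVec, dotProduct_sum,
        Finset.sum_neg_distrib, ← mulVec_mulVec]
      ring
  have hy := (hΦ _ hQ).dotProduct_mulVec_nonneg y
  have hx := Finset.sum_nonneg fun i (_ : i ∈ Finset.univ) =>
    two_by_two_form_nonneg hT (hS i) Φ hΦ (x i) y
  convert add_nonneg hx hy using 1
  simp only [arrowForm, map_sub, map_sum, sub_mulVec, dotProduct_sub, sum_mulVec, dotProduct_sum,
    Finset.sum_add_distrib]
  ring

lemma nonneg_of_forall_add_mul_nonneg {a b : ℂ} (h : ∀ ε : ℝ, 0 < ε → 0 ≤ a + ε * b) : 0 ≤ a := by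
  have ht : Filter.Tendsto (fun ε : ℝ => a + ε * b) (nhdsWithin 0 (Set.Ioi 0)) (nhds a) := by
    have hc : Continuous fun ε : ℝ => a + ε * b := by fun_prop
    simpa using (hc.tendsto 0).mono_left nhdsWithin_le_nhds
  exact ge_of_tendsto ht (Filter.eventually_of_mem self_mem_nhdsWithin h)

lemma arrowForm_add_smul {q m : ℕ} (T E R : Matrix (Fin q) (Fin q) ℂ)
    (S : Fin m → Matrix (Fin q) (Fin q) ℂ) (c : ℂ) (x : Fin m → Fin q → ℂ) (y : Fin q → ℂ) :
    arrowForm (T + c • E) R S x y =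
      arrowForm T R S x y + c * ∑ i, star (x i) ⬝ᵥ E *ᵥ x i := by
  simp only [arrowForm, add_mulVec, smul_mulVec, dotProduct_add, dotProduct_smul, smul_eq_mul,
    Finset.sum_add_distrib, Finset.mul_sum]
  ring

theorem positive_map_on_arrow_matrices_last
    {n m : ℕ} (hm : 1 ≤ m)
    (T R : Matrix (Fin n) (Fin n) ℂ) (S : Fin m → Matrix (Fin n) (Fin n) ℂ)
    (A : Fin (m + 1) → Fin (m + 1) → Matrix (Fin n) (Fin n) ℂ)
    (hA : A = fun i j =>
      if h : i = Fin.last m then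
        (if h' : j = Fin.last m then R else S (j.castPred h'))
      else if h' : j = Fin.last m then S (i.castPred h)
      else if i = j then T else 0)
    (hpos : (Matrix.of fun (p q : Fin (m + 1) × Fin n) => A p.1 q.1 p.2 q.2).PosSemidef) :
    ∀ (p : ℕ) (Φ : Matrix (Fin n) (Fin n) ℂ →ₗ[ℂ] Matrix (Fin p) (Fin p) ℂ),
      (∀ M : Matrix (Fin n) (Fin n) ℂ, M.PosSemidef → (Φ M).PosSemidef) →
      (Matrix.of fun (u v : Fin (m + 1) × Fin p) => Φ (A u.1 v.1) u.2 v.2).PosSemidef := by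
  intro p Φ hΦ
  replace hA : A = arrowBlocks T R S := hA
  subst hA
  have hherm : ∀ i j, (arrowBlocks T R S i j)ᴴ = arrowBlocks T R S j i := by
    intro i j
    ext a b
    exact hpos.isHermitian.apply (j, a) (i, b)
  have hR : R.IsHermitian := by
    have := hherm (Fin.last m) (Fin.last m)
    simpa [arrowBlocks, IsHermitian] using this
  have hS : ∀ i, (S i).IsHermitian := by
    intro i
    have := hherm i.castSucc (Fin.last m)
    simpa [arrowBlocks, Fin.castSucc_ne_last, IsHermitian] using this
  have hT : T.PosSemidef := by
    have := hpos.submatrix fun a : Fin n => ((⟨0, hm⟩ : Fin m).castSucc, a)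
    convert this using 1
    ext a b
    have h0 := Fin.castSucc_ne_last (⟨0, hm⟩ : Fin m)
    simp only [arrowBlocks, submatrix_apply, of_apply, dif_neg h0, if_true]
  have hform : ∀ x y, 0 ≤ arrowForm T R S x y := by
    intro x y
    have := hpos.dotProduct_mulVec_nonneg
      fun u => Fin.lastCases (motive := fun _ => Fin n → ℂ) y x u.1 u.2
    rw [arrowBlocks_form] at this
    simpa using this
  have hΦA : ∀ i j, Φ (arrowBlocks T R S i j) =
      arrowBlocks (Φ T) (Φ R) (fun i => Φ (S i)) i j := by
    intro i j
    unfold arrowBlocks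
    split_ifs <;> simp
  simp only [hΦA]
  refine PosSemidef.of_dotProduct_mulVec_nonneg ?_ fun z => ?_
  · ext ⟨i, a⟩ ⟨j, b⟩
    have h1 := map_isHermitian hR Φ hΦ
    have h2 := (hΦ _ hT).isHermitian
    have h3 := fun k => map_isHermitian (hS k) Φ hΦ
    have : (arrowBlocks (Φ T) (Φ R) (fun i => Φ (S i)) j i)ᴴ =
        arrowBlocks (Φ T) (Φ R) (fun i => Φ (S i)) i j := by
      by_cases hi : i = Fin.last m <;> by_cases hj : j = Fin.last m
      · simp [arrowBlocks, hi, hj, h1.eq]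
      · simp [arrowBlocks, hi, hj, (h3 _).eq]
      · simp [arrowBlocks, hi, hj, (h3 _).eq]
      · by_cases hij : i = j
        · simp [arrowBlocks, hj, hij, h2.eq]
        · simp [arrowBlocks, hi, hj, hij, Ne.symm hij]
    exact congrFun (congrFun this a) b
  · rw [arrowBlocks_form]
    refine nonneg_of_forall_add_mul_nonneg
      (b := ∑ i : Fin m, star (fun a => z (i.castSucc, a)) ⬝ᵥ Φ 1 *ᵥ fun a => z (i.castSucc, a))
      fun ε hε => ?_
    rw [← arrowForm_add_smul _ (Φ 1), ← map_smul, ← map_add]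
    have hε' : (0 : ℂ) < ε := by exact_mod_cast hε
    refine arrowForm_map_nonneg_of_posDef
      (PosDef.posSemidef_add hT (PosDef.one.smul hε')) hR hS (fun x y => ?_) Φ hΦ _ _
    rw [arrowForm_add_smul]
    refine add_nonneg (hform x y) (mul_nonneg hε'.le (Finset.sum_nonneg fun i _ => ?_))
    exact PosSemidef.one.dotProduct_mulVec_nonneg _
end

section
/- Let M : Matrix (Fin m) (Fin n) ℂ be an isometry, i.e. Mᴴ * M = 1. Then the block matrix U = fromBlocks M (1 − M * Mᴴ) 0 (−Mᴴ) (with blocks M : m×n, 1 − M Mᴴ : m×m, 0 : n×n, −Mᴴ : n×m) is unitary: Uᴴ * U = 1 and U * Uᴴ = 1. -/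
open Matrix

/-!
Put `P = M * Mᴴ`. Since `Mᴴ * M = 1`, we have `P * M = M` and `Mᴴ * P = Mᴴ`, so `P` is a Hermitian
idempotent. Multiplying blockwise, the off-diagonal blocks of both products are, up to sign,
`Mᴴ * (1 - P) = 0` or `(1 - P) * M = 0`, and the diagonal blocks are `Mᴴ * M = 1` and
`P + (1 - P) * (1 - P) = 1`.
-/

theorem julia_block_of_isometry_is_unitary
    {m n : ℕ} (M : Matrix (Fin m) (Fin n) ℂ) (hM : Mᴴ * M = 1) :
    (fromBlocks M (1 - M * Mᴴ) 0 (-Mᴴ))ᴴ * fromBlocks M (1 - M * Mᴴ) 0 (-Mᴴ) = 1 ∧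
    fromBlocks M (1 - M * Mᴴ) 0 (-Mᴴ) * (fromBlocks M (1 - M * Mᴴ) 0 (-Mᴴ))ᴴ = 1 := by
  have h1 : Mᴴ * (1 - M * Mᴴ) = 0 := by
    rw [Matrix.mul_sub, ← Matrix.mul_assoc, hM, Matrix.mul_one, Matrix.one_mul, sub_self]
  have h2 : (1 - M * Mᴴ) * M = 0 := by
    rw [Matrix.sub_mul, Matrix.mul_assoc, hM, Matrix.mul_one, Matrix.one_mul, sub_self]
  have h3 : (1 - M * Mᴴ) * (1 - M * Mᴴ) = 1 - M * Mᴴ := by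
    rw [Matrix.mul_sub, ← Matrix.mul_assoc, h2, Matrix.mul_one, Matrix.zero_mul, sub_zero]
  have h4 : (1 - M * Mᴴ)ᴴ = 1 - M * Mᴴ := by simp
  rw [fromBlocks_conjTranspose, h4, fromBlocks_multiply, fromBlocks_multiply]
  constructor <;> simp [h1, h2, h3, hM]
end

section
/- Let E : Fin N → Matrix (Fin n) (Fin n) ℂ be a family of Kraus operators of a trace-nonincreasing quantum operation, i.e. 1 − ∑ i, (E i)ᴴ * (E i) is positive semidefinite. Then there exists a unitary matrix U : Matrix ((Fin N × Fin n) ⊕ Fin n) ((Fin N × Fin n) ⊕ Fin n) ℂ (Uᴴ * U = 1 and U * Uᴴ = 1) whose top-right block column encodes the stacked Kraus column: U (Sum.inl (i, a)) (Sum.inr b) = (E i) a b for all i : Fin N and a, b : Fin n. Consequently, for every ρ : Matrix (Fin n) (Fin n) ℂ, ∑ i, (E i) * ρ * (E i)ᴴ is recovered from the corresponding blocks of U. -/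
open Matrix
open scoped ComplexOrder

/-!
Write the positive semidefinite defect `1 - ∑ i, (E i)ᴴ * E i` as `Dᴴ * D`. Stacking the `E i` on
top of `D` gives a matrix whose columns are orthonormal vectors in `ℂ^(N * n + n)`: their Gram
matrix is `∑ i, (E i)ᴴ * E i + Dᴴ * D = 1`. These columns extend to an orthonormal basis of the
whole space, and the matrix having that basis as its columns is the unitary dilation.
-/

/-- Extension of an orthonormal family to an orthonormal basis, in matrix form: an isometry `V` is
the block of columns indexed by `Sum.inr` in a unitary matrix. -/
lemma exists_isometry_completion {m n : Type*} [Fintype m] [Fintype n] [DecidableEq m]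
    [DecidableEq n] (V : Matrix (m ⊕ n) n ℂ) (hV : Vᴴ * V = 1) :
    ∃ U : Matrix (m ⊕ n) (m ⊕ n) ℂ, Uᴴ * U = 1 ∧ ∀ x b, U x (Sum.inr b) = V x b := by
  let v : m ⊕ n → EuclideanSpace ℂ (m ⊕ n) :=
    Sum.elim (fun _ => 0) fun b => WithLp.toLp 2 fun x => V x b
  have hv : Orthonormal ℂ ((Set.range Sum.inr).domRestrict v) := by
    rw [orthonormal_iff_ite]
    rintro ⟨_, b, rfl⟩ ⟨_, c, rfl⟩
    have h := congrFun (congrFun hV b) c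
    by_cases hbc : b = c
    · subst hbc
      simpa [v, Matrix.mul_apply, PiLp.inner_apply, mul_comm,
        -inner_self_eq_norm_sq_to_K] using h
    · rw [if_neg fun h' => hbc (Sum.inr_injective (congrArg Subtype.val h'))]
      simpa [v, Matrix.mul_apply, PiLp.inner_apply, hbc, mul_comm] using h
  obtain ⟨u, hu⟩ := hv.exists_orthonormalBasis_extension_of_card_eq (by simp)
  refine ⟨Matrix.of fun x y => u y x, ?_, fun x b => ?_⟩
  · ext y z
    have h := orthonormal_iff_ite.mp u.orthonormal y z
    simpa [Matrix.mul_apply, PiLp.inner_apply, Matrix.one_apply, mul_comm] using h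
  · simp [hu (Sum.inr b) ⟨b, rfl⟩, v]

theorem unitary_dilation_of_quantum_operation
    {N n : ℕ} (E : Fin N → Matrix (Fin n) (Fin n) ℂ)
    (hE : (1 - ∑ i, (E i)ᴴ * E i).PosSemidef) :
    ∃ U : Matrix ((Fin N × Fin n) ⊕ Fin n) ((Fin N × Fin n) ⊕ Fin n) ℂ,
      Uᴴ * U = 1 ∧ U * Uᴴ = 1 ∧
      (∀ (i : Fin N) (a b : Fin n), U (Sum.inl (i, a)) (Sum.inr b) = E i a b) ∧
      ∀ ρ : Matrix (Fin n) (Fin n) ℂ,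
        ∑ i, E i * ρ * (E i)ᴴ =
          ∑ i, (Matrix.of fun a b => U (Sum.inl (i, a)) (Sum.inr b)) * ρ *
            (Matrix.of fun a b => U (Sum.inl (i, a)) (Sum.inr b))ᴴ := by
  obtain ⟨D, hD⟩ : ∃ D : Matrix (Fin n) (Fin n) ℂ, 1 - ∑ i, (E i)ᴴ * E i = Dᴴ * D := by
    open scoped MatrixOrder in
    exact CStarAlgebra.nonneg_iff_eq_star_mul_self.mp hE.nonneg
  let V : Matrix ((Fin N × Fin n) ⊕ Fin n) (Fin n) ℂ :=
    Matrix.of fun x b => Sum.elim (fun p : Fin N × Fin n => E p.1 p.2 b) (fun a => D a b) x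
  have hV : Vᴴ * V = 1 := by
    rw [sub_eq_iff_eq_add'] at hD
    rw [hD]
    ext b c
    simp [V, Matrix.mul_apply, Matrix.sum_apply, Fintype.sum_prod_type]
  obtain ⟨U, hU, hUV⟩ := exists_isometry_completion V hV
  have hUE : ∀ (i : Fin N) (a b : Fin n), U (Sum.inl (i, a)) (Sum.inr b) = E i a b :=
    fun i a b => hUV _ _
  refine ⟨U, hU, mul_eq_one_comm.mp hU, hUE, fun ρ => ?_⟩
  have hblock : ∀ i, (Matrix.of fun a b => U (Sum.inl (i, a)) (Sum.inr b)) = E i :=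
    fun i => Matrix.ext (hUE i)
  simp only [hblock]
end
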